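/- For every integer d ≥ 1 there exists a constant C_d > 0, depending only on d, such that for every integer n ≥ 1, every degree-d polynomial threshold function f : {-1,1}^n → {-1,1} satisfies BSA[f] ≤ C_d · (log(e·n))^{C_d}. -/

import Mathlib

open Finset
open scoped Classical

/-- The embedding of `Bool` into `{-1, 1} ⊆ ℝ`. -/
noncomputable def chi (b : Bool) : ℝ := if b then 1 else -1

/-- Flip the `i`-th coordinate of a point of the Boolean cube. -/
def flipAt {n : ℕ} (x : Fin n → Bool) (i : Fin n) : Fin n → Bool :=
  Function.update x i (!x i)

/-- The sensitivity of `f` at `x`: the number of coordinates whose flip changes `f`. -/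
noncomputable def sens {n : ℕ} (f : (Fin n → Bool) → ℝ) (x : Fin n → Bool) : ℕ :=
  (Finset.univ.filter (fun i => f (flipAt x i) ≠ f x)).card

/-- The Boolean surface area `BSA[f] = E_x √(s_f(x))`, `x` uniform on the cube. -/
noncomputable def BSA {n : ℕ} (f : (Fin n → Bool) → ℝ) : ℝ :=
  (∑ x : Fin n → Bool, Real.sqrt (sens f x)) / 2 ^ n

/-- Evaluation of a polynomial at a point of the cube `{-1,1}^n`. -/
noncomputable def pev {n : ℕ} (p : MvPolynomial (Fin n) ℝ) (x : Fin n → Bool) : ℝ :=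
  MvPolynomial.eval (fun i => chi (x i)) p

/-- `f` is a degree-`d` polynomial threshold function: `f = sgn p` for some multilinear
polynomial `p` of total degree at most `d` that is nonvanishing on the cube. -/
def IsPTF (d : ℕ) {n : ℕ} (f : (Fin n → Bool) → ℝ) : Prop :=
  ∃ p : MvPolynomial (Fin n) ℝ,
    (∀ m ∈ p.support, ∀ i, m i ≤ 1) ∧ p.totalDegree ≤ d ∧
    ∀ x, pev p x ≠ 0 ∧ f x = Real.sign (pev p x)

/-!
A threshold function of degree `d` has average sensitivity at most `√n` up to logarithmic factors.
This is proved by induction on `d`: the average sensitivity is a correlation of `f = sgn p` with the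
signs of the derivatives of `p`, which have degree `d - 1`, and this correlation is interpolated by
resampling random blocks of coordinates that shrink by a factor of two in each step.

For the surface area one needs the tail bound `P(s_f ≥ s) ≲ polylog(n) / √s`. Colour the coordinates
at random with a bounded number of special labels and about `s` ordinary ones. If `s_f(x) ≥ s`, then
overwriting the label of one pivotal coordinate per group by a suitable special label shows that,
with probability bounded below, every one of many groups of special labels changes `p(x)` by a
constant factor when flipped. If these changes were stable, meaning that they persist after flipping
further special blocks, then `p` would decay geometrically along many independent directions, which
is impossible for a polynomial of low degree. So some stability test fails; but each test is itself
a threshold function of degree `d` in the labels, and by symmetry between the unflipped labels and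
the energy bound it fails with probability at most `polylog(n) / √s`. Summing the tail bound against
`√s ≤ ∑_{m ≤ s} 1 / √m` leaves a harmonic sum.
-/

namespace BoolCube

open scoped symmDiff BigOperators

variable {ι κ B : Type*}

/-! ### Functions on the cube -/

lemma chi_not (b : Bool) : chi (!b) = -chi b := by cases b <;> simp [chi]

lemma chi_sq (b : Bool) : chi b ^ 2 = 1 := by cases b <;> norm_num [chi]

/-- The point of the cube with a single `true`, at `i`; `x ∆ single i` is `x` with coordinate `i`
flipped. -/
def single [DecidableEq ι] (i : ι) : ι → Bool := fun j => decide (j = i)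

@[simp]
lemma symmDiff_single_self [DecidableEq ι] (x : ι → Bool) (i : ι) : (x ∆ single i) i = !x i := by
  simp [single, Bool.symmDiff_eq_xor]

lemma symmDiff_single_of_ne [DecidableEq ι] (x : ι → Bool) {i j : ι} (h : j ≠ i) :
    (x ∆ single i) j = x j := by
  simp [single, h, Bool.symmDiff_eq_xor]

lemma symmDiff_comp (y z : B → Bool) (β : ι → B) : (y ∆ z) ∘ β = (y ∘ β) ∆ (z ∘ β) := rfl

lemma expect_symmDiff_right [Fintype ι] [DecidableEq ι] (u : ι → Bool) (φ : (ι → Bool) → ℝ) :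
    𝔼 x, φ (x ∆ u) = 𝔼 x, φ x :=
  Fintype.expect_bijective _ (symmDiff_left_involutive u).bijective _ _ fun _ => rfl

lemma dependsOn_inter {α β : Type*} {f : (ι → α) → β} {s t : Set ι}
    (hs : DependsOn f s) (ht : DependsOn f t) : DependsOn f (s ∩ t) := by
  intro x y hxy
  calc f x = f (s.piecewise x y) := hs fun i hi => by simp [hi]
    _ = f y := ht fun i hi => by
      by_cases his : i ∈ s
      · simpa [his] using hxy i ⟨his, hi⟩
      · simp [his]

lemma dependsOn_compl_singleton_of_flip [DecidableEq ι] {f : (ι → Bool) → ℝ} {i : ι}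
    (h : ∀ x, f (x ∆ single i) = f x) : DependsOn f {i}ᶜ := by
  intro x y hxy
  by_cases hi : x i = y i
  · congr 1
    funext j
    by_cases hj : j = i
    · rw [hj, hi]
    · exact hxy j hj
  · rw [← h x]
    congr 1
    funext j
    by_cases hj : j = i
    · subst hj
      rw [symmDiff_single_self]
      cases hx : x j <;> cases hy : y j <;> simp_all
    · rw [symmDiff_single_of_ne _ hj, hxy j hj]

/-- The sign function with the convention `sgn 0 = 1`, so that it is always `±1`. -/
noncomputable def sgn (t : ℝ) : ℝ := if 0 ≤ t then 1 else -1

lemma sgn_of_nonneg {t : ℝ} (h : 0 ≤ t) : sgn t = 1 := if_pos h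

lemma sgn_of_neg {t : ℝ} (h : t < 0) : sgn t = -1 := if_neg h.not_ge

lemma sgn_eq_or (t : ℝ) : sgn t = 1 ∨ sgn t = -1 := by
  unfold sgn
  split_ifs <;> simp

lemma sgn_sq (t : ℝ) : sgn t ^ 2 = 1 := by
  rcases sgn_eq_or t with h | h <;> simp [h]

lemma sgn_sub_sgn_sq (a b : ℝ) :
    (sgn a - sgn b) ^ 2 = 2 * ((sgn a - sgn b) * sgn (a - b)) := by
  rcases le_or_gt 0 a with ha | ha <;> rcases le_or_gt 0 b with hb | hb
  · simp [sgn_of_nonneg ha, sgn_of_nonneg hb]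
  · rw [sgn_of_nonneg ha, sgn_of_neg hb, sgn_of_nonneg (by linarith : 0 ≤ a - b)]
    norm_num
  · rw [sgn_of_neg ha, sgn_of_nonneg hb, sgn_of_neg (by linarith : a - b < 0)]
    norm_num
  · simp [sgn_of_neg ha, sgn_of_neg hb]

/-- The discrete derivative of `g` in direction `i`, normalised so as not to depend on the
coordinate `i` (it is twice the derivative of the multilinear extension of `g`). -/
noncomputable def derivAt [DecidableEq ι] (i : ι) (g : (ι → Bool) → ℝ) (x : ι → Bool) : ℝ :=
  chi (x i) * (g x - g (x ∆ single i))

lemma derivAt_symmDiff_single [DecidableEq ι] (i : ι) (g : (ι → Bool) → ℝ) (x : ι → Bool) :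
    derivAt i g (x ∆ single i) = derivAt i g x := by
  simp only [derivAt, symmDiff_single_self, symmDiff_symmDiff_cancel_right, chi_not]
  ring

lemma dependsOn_derivAt [DecidableEq ι] (i : ι) (g : (ι → Bool) → ℝ) :
    DependsOn (derivAt i g) {i}ᶜ :=
  dependsOn_compl_singleton_of_flip (derivAt_symmDiff_single i g)

lemma dependsOn_sgn_derivAt [DecidableEq ι] (i : ι) (g : (ι → Bool) → ℝ) :
    DependsOn (fun x => sgn (derivAt i g x)) {i}ᶜ := fun _ _ hxy =>
  congrArg sgn (dependsOn_derivAt i g hxy)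

lemma sgn_sub_sgn_flip_sq [DecidableEq ι] (i : ι) (g : (ι → Bool) → ℝ) (x : ι → Bool) :
    (sgn (g x) - sgn (g (x ∆ single i))) ^ 2 =
      2 * (derivAt i (fun y => sgn (g y)) x * sgn (derivAt i g x)) := by
  unfold derivAt
  cases x i
  · rw [sub_sq_comm, sgn_sub_sgn_sq]
    simp only [chi, Bool.false_eq_true, if_false, neg_one_mul, neg_sub]
  · rw [sgn_sub_sgn_sq]
    simp only [chi, if_true, one_mul]

/-! ### Degree -/

/-- The functions on the cube of degree at most `d`, described as the linear combinations of
functions of at most `d` variables each. -/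
def degreeLE (ι : Type*) (d : ℕ) : Submodule ℝ ((ι → Bool) → ℝ) :=
  Submodule.span ℝ {g | ∃ S : Finset ι, S.card ≤ d ∧ DependsOn g S}

lemma mem_degreeLE_of_dependsOn {d : ℕ} {g : (ι → Bool) → ℝ} {S : Finset ι} (hS : S.card ≤ d)
    (hg : DependsOn g S) : g ∈ degreeLE ι d :=
  Submodule.subset_span ⟨S, hS, hg⟩

lemma map_mem_degreeLE {d e : ℕ} (L : ((ι → Bool) → ℝ) →ₗ[ℝ] ((κ → Bool) → ℝ))
    (hL : ∀ g, ∀ S : Finset ι, S.card ≤ d → DependsOn g S → L g ∈ degreeLE κ e)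
    {g : (ι → Bool) → ℝ} (hg : g ∈ degreeLE ι d) : L g ∈ degreeLE κ e := by
  have hle : degreeLE ι d ≤ (degreeLE κ e).comap L :=
    Submodule.span_le.2 fun h ⟨S, hS, hh⟩ => hL h S hS hh
  exact hle hg

lemma comp_mem_degreeLE {d : ℕ} {g : (ι → Bool) → ℝ} (hg : g ∈ degreeLE ι d)
    (φ : (κ → Bool) → ι → Bool) (t : ι → Finset κ) (ht : ∀ i, (t i).card ≤ 1)
    (hφ : ∀ i, DependsOn (φ · i) (t i)) : (fun y => g (φ y)) ∈ degreeLE κ d := by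
  refine map_mem_degreeLE (LinearMap.funLeft ℝ ℝ φ) (fun h S hS hh => ?_) hg
  refine mem_degreeLE_of_dependsOn (S := S.biUnion t) ?_ fun x y hxy => hh fun i hi => ?_
  · exact (card_biUnion_le_card_mul S t 1 fun i _ => ht i).trans (by simpa using hS)
  · exact hφ i fun k hk => hxy k (mem_biUnion.2 ⟨i, hi, hk⟩)

lemma comp_symmDiff_mem_degreeLE {d : ℕ} {g : (ι → Bool) → ℝ} (hg : g ∈ degreeLE ι d)
    (u : ι → Bool) : (fun x => g (x ∆ u)) ∈ degreeLE ι d :=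
  comp_mem_degreeLE hg (· ∆ u) (fun i => {i}) (fun i => by simp)
    fun i x y hxy => by simp [hxy i]

lemma comp_pullback_mem_degreeLE {d : ℕ} {g : (ι → Bool) → ℝ} (hg : g ∈ degreeLE ι d)
    (x : ι → Bool) (β : ι → B) : (fun y : B → Bool => g (x ∆ (y ∘ β))) ∈ degreeLE B d :=
  comp_mem_degreeLE hg (fun y => x ∆ (y ∘ β)) (fun i => {β i}) (fun i => by simp)
    fun i y z hyz => by simp [hyz (β i)]

lemma derivAt_mem_degreeLE [DecidableEq ι] {d : ℕ} {g : (ι → Bool) → ℝ}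
    (hg : g ∈ degreeLE ι (d + 1)) (i : ι) : derivAt i g ∈ degreeLE ι d := by
  let L : ((ι → Bool) → ℝ) →ₗ[ℝ] ((ι → Bool) → ℝ) :=
    { toFun := derivAt i
      map_add' := fun g h => by funext x; simp only [derivAt, Pi.add_apply]; ring
      map_smul' := fun a g => by
        funext x; simp only [derivAt, Pi.smul_apply, smul_eq_mul, RingHom.id_apply]; ring }
  refine map_mem_degreeLE L (fun h S hS hh => ?_) hg
  have hdep : DependsOn (derivAt i h) (insert i S : Finset ι) := fun x y hxy => by
    have hx : x i = y i := hxy i (by simp)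
    have h₁ : h x = h y := hh fun j hj => hxy j (by simp_all)
    have h₂ : h (x ∆ single i) = h (y ∆ single i) := hh fun j hj => by
      simp [hxy j (by simp_all)]
    rw [derivAt, derivAt, hx, h₁, h₂]
  by_cases hi : i ∈ S
  · refine mem_degreeLE_of_dependsOn (S := S.erase i) ?_ ?_
    · rw [card_erase_of_mem hi]
      omega
    · refine (dependsOn_inter hdep (dependsOn_derivAt i h)).mono fun j hj => ?_
      simp_all
  · have : derivAt i h = 0 := by
      funext x
      have hflip : h (x ∆ single i) = h x :=
        hh fun j hj => symmDiff_single_of_ne x (ne_of_mem_of_not_mem hj hi)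
      simp [derivAt, hflip]
    change derivAt i h ∈ _
    exact this ▸ zero_mem _

lemma eq_of_mem_degreeLE_zero {g : (ι → Bool) → ℝ} (hg : g ∈ degreeLE ι 0) (x y : ι → Bool) :
    g x = g y := by
  induction hg using Submodule.span_induction with
  | mem g hg =>
    obtain ⟨S, hS, hg⟩ := hg
    exact hg fun i hi => by simp_all
  | zero => rfl
  | add g h _ _ hg hh => simp [hg, hh]
  | smul a g _ hg => simp [hg]

/-- The product of all coordinates of a point of `{-1, 1}^κ`. -/
noncomputable def parity [Fintype κ] (z : κ → Bool) : ℝ := ∏ t, chi (z t)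

lemma parity_symmDiff_single [Fintype κ] [DecidableEq κ] (z : κ → Bool) (t : κ) :
    parity (z ∆ single t) = -parity z := by
  rw [parity, parity, ← mul_prod_erase _ _ (mem_univ t), ← mul_prod_erase univ _ (mem_univ t),
    symmDiff_single_self, chi_not, neg_mul]
  congr 2
  exact prod_congr rfl fun s hs => by rw [symmDiff_single_of_ne z (ne_of_mem_erase hs)]

lemma sum_parity_mul_eq_zero [Fintype κ] [DecidableEq κ] {d : ℕ} (hd : d < Fintype.card κ)
    {g : (κ → Bool) → ℝ} (hg : g ∈ degreeLE κ d) : ∑ z, parity z * g z = 0 := by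
  induction hg using Submodule.span_induction with
  | mem g hg =>
    obtain ⟨S, hS, hg⟩ := hg
    obtain ⟨t, -, ht⟩ := exists_mem_notMem_of_card_lt_card
      (hS.trans_lt hd : S.card < (univ : Finset κ).card)
    have hflip : ∀ z, g (z ∆ single t) = g z := fun z =>
      hg fun s hs => symmDiff_single_of_ne z (ne_of_mem_of_not_mem hs ht)
    have hneg : ∑ z, parity z * g z = ∑ z, -(parity z * g z) :=
      Fintype.sum_bijective _ (symmDiff_left_involutive (single t)).bijective _ _ fun z => by
        simp only [parity_symmDiff_single, hflip]
        ring
    rw [sum_neg_distrib] at hneg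
    linarith
  | zero => simp
  | add g h _ _ hg hh => simp only [Pi.add_apply, mul_add, sum_add_distrib, hg, hh, add_zero]
  | smul a g _ hg =>
    simp only [Pi.smul_apply, smul_eq_mul, mul_left_comm _ a, ← mul_sum, hg, mul_zero]

lemma pev_mem_degreeLE {n d : ℕ} {p : MvPolynomial (Fin n) ℝ} (hp : p.totalDegree ≤ d) :
    pev p ∈ degreeLE (Fin n) d := by
  have hsum : pev p = ∑ m ∈ p.support,
      fun x => p.coeff m * ∏ i ∈ m.support, chi (x i) ^ m i := by
    funext x
    rw [Finset.sum_apply, pev, MvPolynomial.eval_eq]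
  rw [hsum]
  refine Submodule.sum_mem _ fun m hm => mem_degreeLE_of_dependsOn (S := m.support) ?_ ?_
  · calc m.support.card = ∑ i ∈ m.support, 1 := card_eq_sum_ones _
      _ ≤ ∑ i ∈ m.support, m i :=
        sum_le_sum fun i hi => Nat.one_le_iff_ne_zero.2 (Finsupp.mem_support_iff.1 hi)
      _ ≤ d := (MvPolynomial.le_totalDegree hm).trans hp
  · intro x y hxy
    simp only
    rw [prod_congr rfl fun i hi => by rw [hxy i hi]]

/-! ### Energy and random blocks -/

lemma single_comp_equiv [DecidableEq B] (e : B ≃ B) (l : B) : single (e l) ∘ e = single l := by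
  funext m
  simp [single]

section Energy

variable [Fintype ι] [DecidableEq ι]

/-- The mean square change of `f` along the edges of the cube; for a `±1`-valued function this is
four times its average sensitivity. -/
noncomputable def energy (f : (ι → Bool) → ℝ) : ℝ :=
  ∑ i, 𝔼 x, (f x - f (x ∆ single i)) ^ 2

/-- Degree-`d` threshold functions of `n ≤ N` variables have energy at most `X √n`. -/
def EnergyBound (d N : ℕ) (X : ℝ) : Prop :=
  ∀ (ι : Type) [Fintype ι] [DecidableEq ι], Fintype.card ι ≤ N → ∀ g ∈ degreeLE ι d,
    energy (fun x => sgn (g x)) ≤ X * √(Fintype.card ι)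

variable [Fintype B]

/-- Label the coordinates at random by elements of `B`: the mean square change of `F` when every
coordinate whose label lies in the set `y` is flipped. The function `F` may depend on the
labelling. -/
noncomputable def blockInfluence (F : (ι → B) → (ι → Bool) → ℝ) (y : B → Bool) : ℝ :=
  𝔼 β, 𝔼 x, (F β x - F β (x ∆ (y ∘ β))) ^ 2

lemma blockInfluence_nonneg (F : (ι → B) → (ι → Bool) → ℝ) (y : B → Bool) :
    0 ≤ blockInfluence F y :=
  expect_nonneg fun _ _ => expect_nonneg fun _ _ => sq_nonneg _

lemma blockInfluence_comp_equiv {F : (ι → B) → (ι → Bool) → ℝ} (e : B ≃ B)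
    (he : ∀ β, F (e ∘ β) = F β) (y : B → Bool) :
    blockInfluence F (y ∘ e) = blockInfluence F y :=
  Fintype.expect_equiv (Equiv.arrowCongr (Equiv.refl ι) e) _ _ fun β => by
    change _ = 𝔼 x, (F (e ∘ β) x - F (e ∘ β) (x ∆ (y ∘ e ∘ β))) ^ 2
    rw [he]
    rfl

variable [DecidableEq B]

lemma sum_blockInfluence_single (F : (ι → B) → (ι → Bool) → ℝ) :
    ∑ l, blockInfluence F (single l) = 𝔼 β, 𝔼 x, energy fun y => F β (x ∆ (y ∘ β)) := by
  simp only [energy, blockInfluence, expect_sum_comm]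
  refine sum_congr rfl fun l _ => expect_congr (M := ℝ) rfl fun β _ => ?_
  rw [expect_comm]
  have hshift : ∀ y : B → Bool,
      𝔼 x, (F β (x ∆ (y ∘ β)) - F β (x ∆ ((y ∆ single l) ∘ β))) ^ 2 =
        𝔼 x, (F β x - F β (x ∆ (single l ∘ β))) ^ 2 := fun y => by
    simpa only [symmDiff_comp, symmDiff_assoc] using
      expect_symmDiff_right (y ∘ β) fun x => (F β x - F β (x ∆ (single l ∘ β))) ^ 2
  rw [expect_congr rfl fun y _ => hshift y, Fintype.expect_const]

/-- The sign of the combination of `g` at `x` and at `x` with the blocks in `u` flipped. -/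
noncomputable def linTest (g : (ι → Bool) → ℝ) (u : B → Bool) (a c : ℝ) (β : ι → B)
    (x : ι → Bool) : ℝ :=
  sgn (a * g (x ∆ (u ∘ β)) + c * g x)

/-- The mean square change of `f` when a random set of coordinates, containing each of them
independently with probability `1 / |B|`, is flipped: the coordinates labelled `l` in a random
labelling by `B`. -/
noncomputable def blockNoise (f : (ι → Bool) → ℝ) (l : B) : ℝ :=
  blockInfluence (fun _ => f) (single l)

end Energy

section EnergyBound

variable [Fintype ι] [DecidableEq ι] {B : Type} [Fintype B] [DecidableEq B] {d N : ℕ} {X : ℝ}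
  {g : (ι → Bool) → ℝ}

lemma sum_blockInfluence_linTest_le [Nonempty B] (hX : EnergyBound d N X)
    (hB : Fintype.card B ≤ N) (hg : g ∈ degreeLE ι d) (u : B → Bool) (a c : ℝ) :
    ∑ l, blockInfluence (linTest g u a c) (single l) ≤ X * √(Fintype.card B) := by
  rw [sum_blockInfluence_single]
  refine expect_le univ_nonempty fun β _ => expect_le univ_nonempty fun x _ => ?_
  refine hX B hB (fun y => a * g (x ∆ (y ∘ β) ∆ (u ∘ β)) + c * g (x ∆ (y ∘ β))) ?_
  exact add_mem ((degreeLE B d).smul_mem a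
      (comp_pullback_mem_degreeLE (comp_symmDiff_mem_degreeLE hg (u ∘ β)) x β))
    ((degreeLE B d).smul_mem c (comp_pullback_mem_degreeLE hg x β))

lemma blockInfluence_linTest_single_congr {u : B → Bool} {l m : B} (hlm : u l = u m) (a c : ℝ) :
    blockInfluence (linTest g u a c) (single l) =
      blockInfluence (linTest g u a c) (single m) := by
  have hu : u ∘ Equiv.swap l m = u := by
    funext b
    simp only [Function.comp_apply, Equiv.swap_apply_def]
    split_ifs with h₁ h₂ <;> simp [*]
  rw [← blockInfluence_comp_equiv (Equiv.swap l m) (fun β => ?_) (single m),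
    ← single_comp_equiv (Equiv.swap l m) l, Equiv.swap_apply_left]
  funext x
  rw [linTest, ← Function.comp_assoc, hu, linTest]

/-- All labels outside `u` have the same influence, so that each of them carries only a
proportional share of the energy. -/
lemma card_mul_blockInfluence_linTest_le (hX : EnergyBound d N X) (hB : Fintype.card B ≤ N)
    (hg : g ∈ degreeLE ι d) {u : B → Bool} (a c : ℝ) {l : B} (hl : u l = false) :
    #{m | u m = false} * blockInfluence (linTest g u a c) (single l) ≤
      X * √(Fintype.card B) := by
  have : Nonempty B := ⟨l⟩
  calc #{m | u m = false} * blockInfluence (linTest g u a c) (single l)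
      = ∑ m with u m = false, blockInfluence (linTest g u a c) (single m) := by
        rw [← nsmul_eq_mul, ← sum_const]
        refine sum_congr rfl fun m hm => blockInfluence_linTest_single_congr ?_ a c
        rw [hl, (mem_filter.1 hm).2]
    _ ≤ ∑ m, blockInfluence (linTest g u a c) (single m) :=
        sum_le_univ_sum_of_nonneg fun m => blockInfluence_nonneg _ _
    _ ≤ X * √(Fintype.card B) := sum_blockInfluence_linTest_le hX hB hg u a c

lemma blockNoise_sgn_le (hX : EnergyBound d N X) (hB : Fintype.card B ≤ N)
    (hg : g ∈ degreeLE ι d) (l : B) :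
    blockNoise (fun x => sgn (g x)) l ≤ X / √(Fintype.card B) := by
  have hcard : (0 : ℝ) < Fintype.card B := by exact_mod_cast Fintype.card_pos_iff.2 ⟨l⟩
  have h := card_mul_blockInfluence_linTest_le hX hB hg (u := fun _ => false) 0 1 (l := l) rfl
  have htest : linTest g (fun _ : B => false) 0 1 = fun _ x => sgn (g x) := by
    funext β x
    simp [linTest]
  rw [htest, filter_true_of_mem fun _ _ => rfl, card_univ] at h
  rw [le_div_iff₀ (Real.sqrt_pos.2 hcard)]
  refine le_of_mul_le_mul_right ?_ (Real.sqrt_pos.2 hcard)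
  rw [mul_assoc, Real.mul_self_sqrt hcard.le, mul_comm]
  exact h

end EnergyBound

/-! ### Orthogonality and resampling -/

lemma sq_expect_le_expect_mul_expect {Ω : Type*} [Fintype Ω] {φ U V : Ω → ℝ} (hU : ∀ a, 0 ≤ U a)
    (hV : ∀ a, 0 ≤ V a) (h : ∀ a, φ a ^ 2 ≤ U a * V a) :
    (𝔼 a, φ a) ^ 2 ≤ (𝔼 a, U a) * 𝔼 a, V a := by
  simp only [Fintype.expect_eq_sum_div_card, div_pow, div_mul_div_comm, ← sq]
  gcongr
  exact sum_sq_le_sum_mul_sum_of_sq_le_mul _ (fun a _ => hU a) (fun a _ => hV a) fun a _ => h a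

lemma flip_eq_of_dependsOn [DecidableEq ι] {α : Type*} {φ : (ι → Bool) → α} {s : Set ι} {i : ι}
    (hφ : DependsOn φ s) (hi : i ∉ s) (x : ι → Bool) : φ (x ∆ single i) = φ x :=
  hφ fun _ hj => symmDiff_single_of_ne x (ne_of_mem_of_not_mem hj hi)

lemma dependsOn_comp_piecewise [DecidableEq ι] {α : Type*} {φ : (ι → Bool) → α} {s : Set ι}
    (hφ : DependsOn φ s) (R : Finset ι) (w : ι → Bool) :
    DependsOn (fun x => φ (R.piecewise w x)) (s \ R) := fun x y hxy =>
  hφ fun j hj => by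
    by_cases hjR : j ∈ R
    · simp [hjR]
    · simpa [hjR] using hxy j ⟨hj, hjR⟩

section Orthogonality

variable [Fintype ι] [DecidableEq ι]

lemma expect_eq_zero_of_flip_neg {φ : (ι → Bool) → ℝ} (i : ι)
    (h : ∀ x, φ (x ∆ single i) = -φ x) : 𝔼 x, φ x = 0 := by
  have hneg := expect_symmDiff_right (single i) φ
  simp only [h, expect_neg_distrib] at hneg
  linarith

lemma expect_sum_chi_mul_sq {R : Finset ι} {c : ι → (ι → Bool) → ℝ}
    (hc : ∀ i ∈ R, DependsOn (c i) (R : Set ι)ᶜ) :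
    𝔼 x, (∑ i ∈ R, chi (x i) * c i x) ^ 2 = ∑ i ∈ R, 𝔼 x, c i x ^ 2 := by
  simp only [sq (R.sum _), sum_mul_sum, expect_sum_comm]
  refine sum_congr rfl fun i hi => ?_
  rw [sum_eq_single_of_mem i hi fun j hj hji => expect_eq_zero_of_flip_neg j fun x => ?_]
  · refine expect_congr rfl fun x _ => ?_
    linear_combination c i x ^ 2 * chi_sq (x i)
  · rw [symmDiff_single_self, symmDiff_single_of_ne x hji.symm, chi_not,
      flip_eq_of_dependsOn (hc i hi) (by simpa using hj),
      flip_eq_of_dependsOn (hc j hj) (by simpa using hj)]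
    ring

lemma sq_expect_mul_sum_chi_le (f : (ι → Bool) → ℝ) {R : Finset ι} {c : ι → (ι → Bool) → ℝ}
    (hc : ∀ i ∈ R, DependsOn (c i) (R : Set ι)ᶜ) :
    (𝔼 x, f x * ∑ i ∈ R, chi (x i) * c i x) ^ 2 ≤
      (𝔼 x, 𝔼 w, (f x - f (R.piecewise w x)) ^ 2) * ∑ i ∈ R, 𝔼 x, c i x ^ 2 := by
  have hzero : ∀ w, 𝔼 x, f (R.piecewise w x) * ∑ i ∈ R, chi (x i) * c i x = 0 := fun w => by
    simp only [mul_sum, expect_sum_comm]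
    refine sum_eq_zero fun i hi => expect_eq_zero_of_flip_neg i fun x => ?_
    rw [symmDiff_single_self, chi_not, flip_eq_of_dependsOn (hc i hi) (by simpa using hi),
      flip_eq_of_dependsOn (dependsOn_comp_piecewise (dependsOn_univ f) R w) (by simpa using hi)]
    ring
  have hcentre : 𝔼 x, f x * ∑ i ∈ R, chi (x i) * c i x =
      𝔼 w : ι → Bool, 𝔼 x, (f x - f (R.piecewise w x)) * ∑ i ∈ R, chi (x i) * c i x := by
    simp only [sub_mul, expect_sub_distrib, hzero, sub_zero, Fintype.expect_const]
  rw [hcentre, ← expect_sum_chi_mul_sq hc,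
    expect_comm univ univ fun x w => (f x - f (R.piecewise w x)) ^ 2,
    ← Fintype.expect_const (ι := ι → Bool) (𝔼 x, (∑ i ∈ R, chi (x i) * c i x) ^ 2)]
  exact sq_expect_le_expect_mul_expect (fun _ => expect_nonneg fun _ _ => sq_nonneg _)
    (fun _ => expect_nonneg fun _ _ => sq_nonneg _) fun w => expect_mul_sq_le_sq_mul_sq _ _ _

lemma expect_chi_mul (f : (ι → Bool) → ℝ) {i : ι} {c : (ι → Bool) → ℝ}
    (hc : DependsOn c {i}ᶜ) : 𝔼 x, chi (x i) * f x * c x = 𝔼 x, derivAt i f x / 2 * c x := by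
  have hflip : 𝔼 x, chi (x i) * f (x ∆ single i) * c x = -𝔼 x, chi (x i) * f x * c x := by
    rw [← expect_symmDiff_right (single i), ← expect_neg_distrib]
    refine expect_congr rfl fun x _ => ?_
    rw [symmDiff_single_self, symmDiff_symmDiff_cancel_right, chi_not,
      flip_eq_of_dependsOn hc (by simp)]
    ring
  have hexpand : 𝔼 x, derivAt i f x / 2 * c x =
      (𝔼 x, chi (x i) * f x * c x - 𝔼 x, chi (x i) * f (x ∆ single i) * c x) / 2 := by
    rw [← expect_sub_distrib, expect_div]
    exact expect_congr rfl fun x _ => by rw [derivAt]; ring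
  rw [hexpand, hflip]
  ring

lemma sq_expect_chi_mul_le {Ω : Type*} [Fintype Ω] [Nonempty Ω] (f : (ι → Bool) → ℝ) {i : ι}
    {c : Ω → (ι → Bool) → ℝ} (hc : ∀ ω, DependsOn (c ω) {i}ᶜ) :
    (𝔼 ω, 𝔼 x, chi (x i) * f x * c ω x) ^ 2 ≤
      (𝔼 x, (derivAt i f x / 2) ^ 2) * 𝔼 ω, 𝔼 x, c ω x ^ 2 := by
  rw [← Fintype.expect_const (ι := Ω) (𝔼 x, (derivAt i f x / 2) ^ 2)]
  refine sq_expect_le_expect_mul_expect (fun _ => expect_nonneg fun _ _ => sq_nonneg _)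
    (fun _ => expect_nonneg fun _ _ => sq_nonneg _) fun ω => ?_
  rw [expect_chi_mul f (hc ω)]
  exact expect_mul_sq_le_sq_mul_sq _ _ _

lemma sum_expect_derivAt_half_sq (f : (ι → Bool) → ℝ) :
    ∑ i, 𝔼 x, (derivAt i f x / 2) ^ 2 = energy f / 4 := by
  simp only [energy, sum_div, expect_div]
  refine sum_congr rfl fun i _ => expect_congr rfl fun x _ => ?_
  rw [derivAt, div_pow, mul_pow, chi_sq]
  norm_num

lemma energy_sgn_eq (g : (ι → Bool) → ℝ) :
    energy (fun x => sgn (g x)) =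
      4 * ∑ i, 𝔼 x, chi (x i) * sgn (g x) * sgn (derivAt i g x) := by
  rw [energy, mul_sum]
  refine sum_congr rfl fun i _ => ?_
  rw [expect_chi_mul (fun x => sgn (g x)) (dependsOn_sgn_derivAt i g), mul_expect]
  exact expect_congr rfl fun x _ => by rw [sgn_sub_sgn_flip_sq]; ring

lemma expect_expect_piecewise_swap (R : Finset ι) (φ : (ι → Bool) → (ι → Bool) → ℝ) :
    𝔼 x, 𝔼 y, φ (R.piecewise y x) (R.piecewise x y) = 𝔼 x, 𝔼 y, φ x y := by
  have hinv : Function.Involutive fun p : (ι → Bool) × (ι → Bool) =>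
      (R.piecewise p.2 p.1, R.piecewise p.1 p.2) := fun p => by
    ext j <;> by_cases hj : j ∈ R <;> simp [hj]
  have h := Fintype.expect_bijective _ hinv.bijective _ (fun p => φ p.1 p.2) fun _ => rfl
  rwa [← univ_product_univ, expect_product, expect_product] at h

end Orthogonality

section RandomBlocks

variable [Fintype ι]

/-- The set of coordinates labelled `l`. -/
def block [DecidableEq B] (β : ι → B) (l : B) : Finset ι := {i | β i = l}

@[simp]
lemma mem_block [DecidableEq B] {β : ι → B} {l : B} {i : ι} : i ∈ block β l ↔ β i = l := by
  simp [block]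

variable [DecidableEq ι] {C : Type*} [Fintype C]

lemma expect_labelling_prod [Fintype B] (φ : (ι → B × C) → ℝ) :
    𝔼 β, φ β = 𝔼 β : ι → B, 𝔼 γ : ι → C, φ fun i => (β i, γ i) := by
  rw [Fintype.expect_equiv (Equiv.arrowProdEquivProdArrow ι (fun _ => B) fun _ => C) φ
    (fun p => φ fun i => (p.1 i, p.2 i)) fun _ => rfl, ← univ_product_univ, expect_product]

variable [DecidableEq C]

lemma expect_ite_label_eq {i : ι} {φ : (ι → C) → ℝ} (hφ : DependsOn φ {i}ᶜ) (l l' : C) :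
    (𝔼 β, if β i = l' then φ β else 0) = 𝔼 β, if β i = l then φ β else 0 := by
  refine Fintype.expect_equiv (Equiv.piCongrRight fun j => if j = i then Equiv.swap l l' else
    Equiv.refl C) _ _ fun β => ?_
  have hlabel : Equiv.swap l l' (β i) = l ↔ β i = l' := by
    rw [Equiv.swap_apply_eq_iff, Equiv.swap_apply_left]
  simp only [Equiv.piCongrRight_apply, Pi.map_apply, if_true, hlabel]
  congr 1
  refine hφ fun j hj => ?_
  simp [show j ≠ i from hj]

/-- Conditioning on the label of `i` does not affect what does not depend on this label. -/
lemma card_mul_expect_sum_block {φ : ι → (ι → C) → ℝ} (hφ : ∀ i, DependsOn (φ i) {i}ᶜ) (l : C) :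
    Fintype.card C * 𝔼 β, ∑ i ∈ block β l, φ i β = ∑ i, 𝔼 β, φ i β := by
  simp only [block, sum_filter, expect_sum_comm, mul_sum]
  refine sum_congr rfl fun i _ => ?_
  calc (Fintype.card C : ℝ) * 𝔼 β, (if β i = l then φ i β else 0)
      = ∑ l', 𝔼 β, if β i = l' then φ i β else 0 := by
        rw [sum_congr rfl fun l' _ => expect_ite_label_eq (hφ i) l l', sum_const, nsmul_eq_mul,
          card_univ]
    _ = 𝔼 β, φ i β := by
        rw [← expect_sum_comm]
        exact expect_congr rfl fun β _ => by simp

/-- Resampling a random block flips each of its coordinates with probability one half. -/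
lemma blockNoise_prod_true (f : (ι → Bool) → ℝ) (l : C) :
    blockNoise f ((l, true) : C × Bool) =
      𝔼 β : ι → C, 𝔼 x, 𝔼 w, (f x - f ((block β l).piecewise w x)) ^ 2 := by
  rw [blockNoise, blockInfluence, expect_labelling_prod]
  refine expect_congr rfl fun β _ => ?_
  rw [expect_comm]
  refine expect_congr rfl fun x _ => ?_
  rw [← expect_symmDiff_right x]
  refine expect_congr rfl fun w _ => ?_
  have hpw : x ∆ (single ((l, true) : C × Bool) ∘ fun i => (β i, (w ∆ x) i)) =
      (block β l).piecewise w x := by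
    funext i
    by_cases hi : β i = l
    · cases hx : x i <;> cases hw : w i <;> simp [single, hi, hx, hw]
    · simp [single, hi, Bool.symmDiff_eq_xor]
  rw [hpw]

end RandomBlocks

/-! ### Kane's interpolation -/

section Interpolation

variable [Fintype ι] [DecidableEq ι] [DecidableEq B]

/-- The effect on `φ` of shrinking the resampled block from the label `b` to its refinement
`(b, true)`. -/
noncomputable def resampleDiff (φ : (ι → Bool) → ℝ) (b : B) (β : ι → B × Bool)
    (y x : ι → Bool) : ℝ :=
  φ ((block β (b, true)).piecewise y x) - φ ((block (Prod.fst ∘ β) b).piecewise y x)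

lemma dependsOn_resampleDiff_label {φ : (ι → Bool) → ℝ} {s : Set ι} (hφ : DependsOn φ s) (b : B) :
    DependsOn (resampleDiff φ b) s := fun β γ hβγ => funext₂ fun y x => by
  have hpw : ∀ j ∈ s, (block β (b, true)).piecewise y x j = (block γ (b, true)).piecewise y x j ∧
      (block (Prod.fst ∘ β) b).piecewise y x j = (block (Prod.fst ∘ γ) b).piecewise y x j :=
    fun j hj => by simp [Finset.piecewise, hβγ j hj]
  rw [resampleDiff, resampleDiff, hφ fun j hj => (hpw j hj).1, hφ fun j hj => (hpw j hj).2]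

lemma dependsOn_resampleDiff (φ : (ι → Bool) → ℝ) (b : B) (β : ι → B × Bool) (y : ι → Bool) :
    DependsOn (resampleDiff φ b β y) (block β (b, true) : Set ι)ᶜ := fun x z hxz => by
  have hsub : (block (Prod.fst ∘ β) b : Set ι)ᶜ ⊆ (block β (b, true) : Set ι)ᶜ := fun j hj hjb =>
    hj (by simp_all)
  have h₁ := dependsOn_comp_piecewise (dependsOn_univ φ) (block β (b, true)) y
  have h₂ := dependsOn_comp_piecewise (dependsOn_univ φ) (block (Prod.fst ∘ β) b) y
  rw [← Set.compl_eq_univ_sdiff] at h₁ h₂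
  exact congrArg₂ (· - ·) (h₁ hxz) (h₂.mono hsub hxz)

variable [Fintype B]

/-- The correlation of `f` with `∑ i, chi (x i) * σ i x`, where the second factor is evaluated after
resampling the coordinates labelled `b` in a random labelling by `B`. Refining `B` interpolates
between independent points (`B` a singleton) and equal ones. -/
noncomputable def interp (f : (ι → Bool) → ℝ) (σ : ι → (ι → Bool) → ℝ) (b : B) : ℝ :=
  ∑ i, 𝔼 β, 𝔼 x, 𝔼 y, chi (x i) * f x * σ i ((block β b).piecewise y x)

lemma interp_unit_le {f : (ι → Bool) → ℝ} {σ : ι → (ι → Bool) → ℝ} (hf : ∀ x, f x ^ 2 = 1)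
    (hσ : ∀ i x, σ i x ^ 2 = 1) : interp f σ () ≤ √(Fintype.card ι) := by
  have hunit : interp f σ () = 𝔼 y, 𝔼 x, f x * ∑ i, chi (x i) * σ i y := by
    rw [expect_comm]
    simp only [interp, mul_sum, expect_sum_comm]
    refine sum_congr rfl fun i _ => ?_
    have hall : ∀ (β : ι → Unit) (x y : ι → Bool), (block β ()).piecewise y x = y :=
      fun β x y => funext fun j => piecewise_eq_of_mem _ _ _ (mem_block.2 rfl)
    simp only [hall, Fintype.expect_const]
    exact expect_congr rfl fun x _ => expect_congr rfl fun y _ => by ring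
  rw [hunit]
  refine expect_le univ_nonempty fun y _ => Real.le_sqrt_of_sq_le ?_
  calc (𝔼 x, f x * ∑ i, chi (x i) * σ i y) ^ 2
      ≤ (𝔼 x, f x ^ 2) * 𝔼 x : ι → Bool, (∑ i, chi (x i) * σ i y) ^ 2 :=
        expect_mul_sq_le_sq_mul_sq _ _ _
    _ = Fintype.card ι := by
        rw [expect_sum_chi_mul_sq (c := fun i _ => σ i y)
          fun i _ => (dependsOn_const (σ i y)).mono (Set.empty_subset _)]
        simp [hf, hσ]

lemma sq_sub_interp_le (f : (ι → Bool) → ℝ) {σ : ι → (ι → Bool) → ℝ}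
    (hσ : ∀ i, DependsOn (σ i) {i}ᶜ) (b : B) :
    ((∑ i, 𝔼 x, chi (x i) * f x * σ i x) - interp f σ b) ^ 2 ≤
      energy f / 4 * ∑ i, blockNoise (σ i) ((b, true) : B × Bool) := by
  have : Nonempty B := ⟨b⟩
  let c : ι → (ι → B) × (ι → Bool) → (ι → Bool) → ℝ := fun i ω x =>
    σ i x - σ i ((block ω.1 b).piecewise ω.2 x)
  have hdiff : ∀ i, (𝔼 x, chi (x i) * f x * σ i x) -
      𝔼 β, 𝔼 x, 𝔼 y, chi (x i) * f x * σ i ((block β b).piecewise y x) =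
        𝔼 ω, 𝔼 x, chi (x i) * f x * c i ω x := fun i => by
    simp only [c, mul_sub, expect_sub_distrib, Fintype.expect_const]
    rw [← univ_product_univ, expect_product]
    exact congrArg _ (expect_congr rfl fun β _ => expect_comm _ _ _)
  have hnoise : ∀ i, 𝔼 ω, 𝔼 x, c i ω x ^ 2 = blockNoise (σ i) ((b, true) : B × Bool) := fun i => by
    rw [blockNoise_prod_true, ← univ_product_univ, expect_product]
    exact expect_congr rfl fun β _ => expect_comm _ _ _
  rw [interp, ← sum_sub_distrib, ← sum_expect_derivAt_half_sq]
  refine sum_sq_le_sum_mul_sum_of_sq_le_mul _ (fun i _ => expect_nonneg fun _ _ => sq_nonneg _)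
    (fun i _ => blockInfluence_nonneg _ _) fun i _ => ?_
  rw [hdiff, ← hnoise]
  refine sq_expect_chi_mul_le f fun ω x y hxy => ?_
  have hresample := (dependsOn_comp_piecewise (hσ i) (block ω.1 b) ω.2).mono Set.sdiff_subset hxy
  simp only [c, hσ i hxy, hresample]

lemma expect_resampleDiff_sq (φ : (ι → Bool) → ℝ) (b : B) :
    𝔼 β, 𝔼 y, 𝔼 x, resampleDiff φ b β y x ^ 2 =
      blockNoise φ (((b, false), true) : (B × Bool) × Bool) := by
  rw [blockNoise_prod_true]
  refine expect_congr rfl fun β _ => ?_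
  rw [expect_comm, ← expect_expect_piecewise_swap (block (Prod.fst ∘ β) b) fun x y =>
    (φ x - φ ((block β (b, false)).piecewise y x)) ^ 2]
  refine expect_congr rfl fun x _ => expect_congr rfl fun y _ => ?_
  have hpw : (block β (b, false)).piecewise ((block (Prod.fst ∘ β) b).piecewise x y)
      ((block (Prod.fst ∘ β) b).piecewise y x) = (block β (b, true)).piecewise y x := by
    funext j
    simp only [Finset.piecewise, mem_block, Function.comp_apply, Prod.ext_iff]
    cases (β j).2 <;> by_cases hj : (β j).1 = b <;> simp [hj]
  rw [resampleDiff, sub_sq_comm, hpw]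

lemma interp_prod_true_sub_interp (f : (ι → Bool) → ℝ) (σ : ι → (ι → Bool) → ℝ) (b : B) :
    interp f σ ((b, true) : B × Bool) - interp f σ b =
      ∑ i, 𝔼 β, 𝔼 y, 𝔼 x, chi (x i) * f x * resampleDiff (σ i) b β y x := by
  have hforget : interp f σ b = ∑ i, 𝔼 β : ι → B × Bool, 𝔼 x, 𝔼 y,
      chi (x i) * f x * σ i ((block (Prod.fst ∘ β) b).piecewise y x) :=
    sum_congr rfl fun i _ => by
      rw [expect_labelling_prod]
      exact expect_congr rfl fun β _ => (Fintype.expect_const _).symm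
  rw [hforget, interp, ← sum_sub_distrib]
  refine sum_congr rfl fun i _ => ?_
  simp only [resampleDiff, mul_sub, expect_sub_distrib]
  congr 1 <;> exact expect_congr rfl fun β _ => expect_comm _ _ _

lemma card_mul_expect_sum_resampleDiff_sq {σ : ι → (ι → Bool) → ℝ}
    (hσ : ∀ i, DependsOn (σ i) {i}ᶜ) (b : B) :
    Fintype.card (B × Bool) * 𝔼 β, 𝔼 y,
        ∑ i ∈ block β (b, true), 𝔼 x, resampleDiff (σ i) b β y x ^ 2 =
      ∑ i, blockNoise (σ i) (((b, false), true) : (B × Bool) × Bool) := by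
  simp only [← expect_resampleDiff_sq]
  rw [← card_mul_expect_sum_block (l := (b, true)) fun i β γ hβγ => ?_]
  · simp only [expect_sum_comm]
  · rw [dependsOn_resampleDiff_label (hσ i) b hβγ]

/-- A single interpolation step. By orthogonality only `f` minus its average over the refined block
matters, and given the labelling only the coordinates of this block contribute. -/
lemma sq_interp_prod_true_sub_interp_le (f : (ι → Bool) → ℝ) {σ : ι → (ι → Bool) → ℝ}
    (hσ : ∀ i, DependsOn (σ i) {i}ᶜ) (b : B) :
    (interp f σ ((b, true) : B × Bool) - interp f σ b) ^ 2 ≤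
      Fintype.card (B × Bool) * blockNoise f (((b, true), true) : (B × Bool) × Bool) *
        ∑ i, blockNoise (σ i) (((b, false), true) : (B × Bool) × Bool) := by
  set N : ℝ := (Fintype.card (B × Bool) : ℝ) with hN
  let R : (ι → B × Bool) → Finset ι := fun β => block β (b, true)
  let D : ι → (ι → B × Bool) → (ι → Bool) → (ι → Bool) → ℝ := fun i => resampleDiff (σ i) b
  have hcond : interp f σ ((b, true) : B × Bool) - interp f σ b =
      N * 𝔼 β, 𝔼 y, 𝔼 x, f x * ∑ i ∈ R β, chi (x i) * D i β y x := by
    rw [interp_prod_true_sub_interp,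
      ← card_mul_expect_sum_block (l := (b, true)) fun i β γ hβγ => ?_]
    · simp only [N, R, D, mul_sum, expect_sum_comm, mul_left_comm (f _), mul_assoc]
    · rw [dependsOn_resampleDiff_label (hσ i) b hβγ]
  have hcs : (𝔼 β, 𝔼 y, 𝔼 x, f x * ∑ i ∈ R β, chi (x i) * D i β y x) ^ 2 ≤
      blockNoise f (((b, true), true) : (B × Bool) × Bool) *
        𝔼 β, 𝔼 y, ∑ i ∈ R β, 𝔼 x, D i β y x ^ 2 := by
    rw [blockNoise_prod_true]
    refine sq_expect_le_expect_mul_expect (fun β => by positivity) (fun β => by positivity)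
      fun β => ?_
    rw [← Fintype.expect_const (ι := ι → Bool) (𝔼 x, 𝔼 w, (f x - f ((R β).piecewise w x)) ^ 2)]
    exact sq_expect_le_expect_mul_expect (fun _ => by positivity) (fun _ => by positivity) fun y =>
      sq_expect_mul_sum_chi_le f fun i _ => dependsOn_resampleDiff (σ i) b β y
  rw [hcond, mul_pow, ← card_mul_expect_sum_resampleDiff_sq hσ, ← hN]
  nlinarith [mul_le_mul_of_nonneg_left hcs (sq_nonneg N)]

end Interpolation

/-! ### Average sensitivity of threshold functions -/

section AverageSensitivity

variable [Fintype ι] [DecidableEq ι]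

lemma energy_sgn_le (g : (ι → Bool) → ℝ) : energy (fun x => sgn (g x)) ≤ 4 * Fintype.card ι := by
  have hedge : ∀ i, 𝔼 x, (sgn (g x) - sgn (g (x ∆ single i))) ^ 2 ≤ 4 := fun i =>
    expect_le univ_nonempty fun x _ => by
      rcases sgn_eq_or (g x) with h | h <;> rcases sgn_eq_or (g (x ∆ single i)) with h' | h' <;>
        norm_num [h, h']
  calc energy (fun x => sgn (g x)) ≤ ∑ _i : ι, 4 := sum_le_sum fun i _ => hedge i
    _ = 4 * Fintype.card ι := by simp [mul_comm]

variable {d N : ℕ} {X Y : ℝ}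

lemma energyBound_four_mul_sqrt (d N : ℕ) : EnergyBound d N (4 * √N) := by
  intro ι _ _ hN g _
  calc energy (fun x => sgn (g x)) ≤ 4 * Fintype.card ι := energy_sgn_le g
    _ = 4 * √(Fintype.card ι) * √(Fintype.card ι) := by
      rw [mul_assoc, Real.mul_self_sqrt (Nat.cast_nonneg _)]
    _ ≤ 4 * √N * √(Fintype.card ι) := by gcongr

lemma EnergyBound.mono (h : EnergyBound d N X) (hXY : X ≤ Y) : EnergyBound d N Y :=
  fun ι _ _ hN g hg => (h ι hN g hg).trans (by gcongr)

lemma isClosed_setOf_energyBound (d N : ℕ) : IsClosed {X | EnergyBound d N X} := by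
  simp only [EnergyBound, Set.ofPred_forall]
  exact isClosed_iInter fun ι => isClosed_iInter fun _ => isClosed_iInter fun _ =>
    isClosed_iInter fun _ => isClosed_iInter fun g => isClosed_iInter fun _ =>
      isClosed_le continuous_const (continuous_id.mul continuous_const)

lemma energyBound_zero (N : ℕ) : EnergyBound 0 N 0 := fun ι _ _ _ g hg => by
  have hconst : ∀ x i, g (x ∆ single i) = g x := fun x i => eq_of_mem_degreeLE_zero hg _ _
  simp [energy, hconst]

end AverageSensitivity

section Ladder

variable [Fintype ι] [DecidableEq ι] {B : Type} [Fintype B] [DecidableEq B] {d N : ℕ} {X Y : ℝ}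
  {g : (ι → Bool) → ℝ}

lemma sum_blockNoise_sgn_derivAt_le (hY : EnergyBound d N Y) (hB : Fintype.card B ≤ N)
    (hg : g ∈ degreeLE ι (d + 1)) (l : B) :
    ∑ i, blockNoise (fun x => sgn (derivAt i g x)) l ≤
      Fintype.card ι * (Y / √(Fintype.card B)) := by
  rw [← nsmul_eq_mul, ← card_univ (α := ι), ← sum_const]
  exact sum_le_sum fun i _ => blockNoise_sgn_le hY hB (derivAt_mem_degreeLE hg i) l

lemma interp_prod_true_le (hX : EnergyBound (d + 1) N X) (hY : EnergyBound d N Y)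
    (hg : g ∈ degreeLE ι (d + 1)) (hB : Fintype.card ((B × Bool) × Bool) ≤ N) (b : B) :
    interp (fun x => sgn (g x)) (fun i x => sgn (derivAt i g x)) ((b, true) : B × Bool) ≤
      interp (fun x => sgn (g x)) (fun i x => sgn (derivAt i g x)) b +
        √(Fintype.card ι * X * Y / 2) := by
  have hf := blockNoise_sgn_le hX hB hg ((b, true), true)
  have hσ := sum_blockNoise_sgn_derivAt_le hY hB hg ((b, false), true)
  have hcard : (Fintype.card ((B × Bool) × Bool) : ℝ) = 2 * Fintype.card (B × Bool) := by
    rw [Fintype.card_prod, Fintype.card_bool]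
    push_cast
    ring
  have hpos : (0 : ℝ) < Fintype.card (B × Bool) := by
    exact_mod_cast Fintype.card_pos_iff.2 ⟨(b, true)⟩
  have hnoise_nonneg := fun i => blockInfluence_nonneg (fun _ : ι → (B × Bool) × Bool =>
    fun x => sgn (derivAt i g x)) (single ((b, false), true))
  rw [← sub_le_iff_le_add']
  refine Real.le_sqrt_of_sq_le ((sq_interp_prod_true_sub_interp_le _ (fun i =>
    dependsOn_sgn_derivAt i g) b).trans ?_)
  rw [hcard] at hf hσ
  set c : ℝ := (Fintype.card (B × Bool) : ℝ)
  calc _ ≤ c * (X / √(2 * c)) * (Fintype.card ι * (Y / √(2 * c))) := by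
        gcongr
        · exact sum_nonneg fun i _ => hnoise_nonneg i
        · exact mul_nonneg hpos.le ((blockInfluence_nonneg _ _).trans hf)
    _ = Fintype.card ι * X * Y * c / (√(2 * c) * √(2 * c)) := by
      field_simp
    _ = Fintype.card ι * X * Y / 2 := by
      rw [Real.mul_self_sqrt (by positivity)]
      field_simp

/-- Doubling the number of labels `k` times starting from a single label. -/
lemma exists_interp_le (hX : EnergyBound (d + 1) N X) (hY : EnergyBound d N Y)
    (hg : g ∈ degreeLE ι (d + 1)) (k : ℕ) (hk : 2 ^ (k + 1) ≤ N) :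
    ∃ (B : Type) (_ : Fintype B) (_ : DecidableEq B) (b : B), Fintype.card B = 2 ^ k ∧
      interp (fun x => sgn (g x)) (fun i x => sgn (derivAt i g x)) b ≤
        √(Fintype.card ι) + k * √(Fintype.card ι * X * Y / 2) := by
  induction k with
  | zero =>
    refine ⟨Unit, inferInstance, inferInstance, (), by simp, ?_⟩
    simpa using interp_unit_le (f := fun x => sgn (g x)) (fun x => sgn_sq _) fun i x => sgn_sq _
  | succ k ih =>
    obtain ⟨B, _, _, b, hB, hb⟩ := ih ((Nat.pow_le_pow_right two_pos (by omega)).trans hk)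
    have hcard : Fintype.card ((B × Bool) × Bool) = 2 ^ (k + 1 + 1) := by
      simp only [Fintype.card_prod, Fintype.card_bool, hB, pow_succ]
    refine ⟨B × Bool, inferInstance, inferInstance, (b, true), ?_, ?_⟩
    · rw [Fintype.card_prod, Fintype.card_bool, hB, pow_succ]
    · have hstep := interp_prod_true_le hX hY hg (hcard.trans_le hk) b
      push_cast
      linarith

lemma sum_expect_chi_mul_le (hX : EnergyBound (d + 1) N X) (hX₀ : 0 ≤ X) (hY : EnergyBound d N Y)
    (hY₀ : 0 ≤ Y) {ι : Type} [Fintype ι] [DecidableEq ι] {g : (ι → Bool) → ℝ}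
    (hι : Fintype.card ι ≤ N) (hg : g ∈ degreeLE ι (d + 1)) (hB : Fintype.card (B × Bool) ≤ N)
    (hn : Fintype.card ι ≤ 2 ^ 2 * Fintype.card (B × Bool)) (b : B) :
    ∑ i, 𝔼 x, chi (x i) * sgn (g x) * sgn (derivAt i g x) ≤
      interp (fun x => sgn (g x)) (fun i x => sgn (derivAt i g x)) b +
        √(Fintype.card ι * X * Y / 2) := by
  have hpos : (0 : ℝ) < Fintype.card (B × Bool) := by
    exact_mod_cast Fintype.card_pos_iff.2 ⟨(b, true)⟩
  have henergy := hX ι hι g hg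
  have hσ := sum_blockNoise_sgn_derivAt_le hY hB hg (b, true)
  have hσ_nonneg : 0 ≤ ∑ i, blockNoise (fun x => sgn (derivAt i g x)) ((b, true) : B × Bool) :=
    sum_nonneg fun i _ => blockInfluence_nonneg _ _
  rw [← sub_le_iff_le_add']
  refine Real.le_sqrt_of_sq_le
    ((sq_sub_interp_le _ (fun i => dependsOn_sgn_derivAt i g) b).trans ?_)
  have hsqrt : √(Fintype.card ι) ≤ 2 * √(Fintype.card (B × Bool)) := by
    rw [← Real.sqrt_sq zero_le_two, ← Real.sqrt_mul (sq_nonneg _)]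
    exact Real.sqrt_le_sqrt (by exact_mod_cast hn)
  set c : ℝ := (Fintype.card (B × Bool) : ℝ)
  set n : ℝ := (Fintype.card ι : ℝ)
  calc _ ≤ X * √n / 4 * (n * (Y / √c)) := by gcongr
    _ = n * X * Y / 4 * (√n / √c) := by ring
    _ ≤ n * X * Y / 4 * 2 := by
      gcongr
      exact div_le_of_le_mul₀ (Real.sqrt_nonneg c) zero_le_two hsqrt
    _ = n * X * Y / 2 := by ring

end Ladder

section Bootstrap

variable {d N : ℕ} {X Y : ℝ}

lemma EnergyBound.improve (hX : EnergyBound (d + 1) N X) (hX₀ : 0 ≤ X) (hY : EnergyBound d N Y)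
    (hY₀ : 0 ≤ Y) : EnergyBound (d + 1) N (4 + 4 * (Nat.log 2 N + 1) * √(X * Y)) := by
  intro ι _ _ hι g hg
  rcases lt_or_ge (Fintype.card ι) 2 with hlt | hge
  · have hsmall : (Fintype.card ι : ℝ) ≤ √(Fintype.card ι) := by
      interval_cases Fintype.card ι <;> simp
    calc energy (fun x => sgn (g x)) ≤ 4 * Fintype.card ι := energy_sgn_le g
      _ ≤ (4 + 4 * (Nat.log 2 N + 1) * √(X * Y)) * √(Fintype.card ι) := by
        gcongr
        exact le_add_of_nonneg_right (by positivity)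
  obtain ⟨k, hk⟩ : ∃ k, Nat.log 2 (Fintype.card ι) = k + 1 :=
    Nat.exists_eq_add_one.2 (Nat.log_pos one_lt_two hge)
  have hlower : 2 ^ (k + 1) ≤ Fintype.card ι := hk ▸ Nat.pow_log_le_self 2 (by omega)
  have hupper : Fintype.card ι < 2 ^ (k + 1 + 1) := hk ▸ Nat.lt_pow_succ_log_self one_lt_two _
  obtain ⟨B, _, _, b, hB, hb⟩ := exists_interp_le hX hY hg k (hlower.trans hι)
  have hcard : Fintype.card (B × Bool) = 2 ^ (k + 1) := by
    rw [Fintype.card_prod, Fintype.card_bool, hB, pow_succ]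
  have hlast := sum_expect_chi_mul_le hX hX₀ hY hY₀ hι hg (hcard.trans_le (hlower.trans hι))
    (by rw [hcard]; omega) b
  have hlog : (k : ℝ) + 1 ≤ Nat.log 2 N + 1 := by
    have hmono : k + 1 ≤ Nat.log 2 N := hk ▸ Nat.log_mono_right hι
    exact_mod_cast hmono.trans (Nat.le_succ _)
  have hstep : √(Fintype.card ι * X * Y / 2) ≤ √(Fintype.card ι) * √(X * Y) := by
    rw [← Real.sqrt_mul (Nat.cast_nonneg _), ← mul_assoc]
    exact Real.sqrt_le_sqrt (half_le_self (by positivity))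
  calc energy (fun x => sgn (g x))
      ≤ 4 * (√(Fintype.card ι) + (k + 1) * √(Fintype.card ι * X * Y / 2)) := by
        rw [energy_sgn_eq]
        linarith
    _ ≤ 4 * (√(Fintype.card ι) + (Nat.log 2 N + 1) * (√(Fintype.card ι) * √(X * Y))) := by gcongr
    _ = (4 + 4 * (Nat.log 2 N + 1) * √(X * Y)) * √(Fintype.card ι) := by ring

/-- Apply `EnergyBound.improve` to the best constant in degree `d + 1`. -/
lemma EnergyBound.succ (hY : EnergyBound d N Y) (hY₀ : 0 ≤ Y) :
    EnergyBound (d + 1) N (8 + 16 * (Nat.log 2 N + 1) ^ 2 * Y) := by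
  let S : Set ℝ := Set.Ici 0 ∩ {X | EnergyBound (d + 1) N X}
  have hbdd : BddBelow S := ⟨0, fun X hX => hX.1⟩
  obtain ⟨hX₀, hX⟩ : sInf S ∈ S := (isClosed_Ici.inter (isClosed_setOf_energyBound _ _)).csInf_mem
    ⟨4 * √N, by simp, energyBound_four_mul_sqrt _ _⟩ hbdd
  have himprove : sInf S ≤ 4 + 4 * (Nat.log 2 N + 1) * √(sInf S * Y) :=
    csInf_le hbdd ⟨by simp only [Set.mem_Ici]; positivity, hX.improve hX₀ hY hY₀⟩
  refine hX.mono ?_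
  rw [Real.sqrt_mul hX₀] at himprove
  nlinarith [sq_nonneg (√(sInf S) - 4 * (Nat.log 2 N + 1) * √Y), Real.sq_sqrt hX₀,
    Real.sq_sqrt hY₀]

/-- Kane's bound on the average sensitivity. -/
lemma energyBound_pow (d N : ℕ) :
    EnergyBound d N ((24 * (Nat.log 2 N + 1) ^ 2) ^ d) := by
  induction d with
  | zero => exact (energyBound_zero N).mono (by simp)
  | succ d ih =>
    have hlog : (1 : ℝ) ≤ (Nat.log 2 N + 1) ^ 2 := one_le_pow₀ (by simp)
    have hpow : (1 : ℝ) ≤ (24 * (Nat.log 2 N + 1) ^ 2) ^ d := one_le_pow₀ (by linarith)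
    refine (ih.succ (by positivity)).mono ?_
    rw [pow_succ (24 * _)]
    nlinarith [mul_le_mul hlog hpow zero_le_one (by positivity)]

end Bootstrap

/-! ### Functions of low degree cannot decay -/

section Decay

lemma abs_parity [Fintype κ] (z : κ → Bool) : |parity z| = 1 := by
  rw [parity, abs_prod]
  exact prod_eq_one fun t _ => by cases z t <;> simp [chi]

lemma exists_ne_bot_abs_le [Fintype κ] {d : ℕ} (hd : d < Fintype.card κ) {g : (κ → Bool) → ℝ}
    (hg : g ∈ degreeLE κ d) : ∃ z, z ≠ ⊥ ∧ |g ⊥| ≤ 2 ^ Fintype.card κ * |g z| := by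
  obtain ⟨t⟩ : Nonempty κ := Fintype.card_pos_iff.1 (Nat.zero_lt_of_lt hd)
  obtain ⟨z, hz, hmax⟩ := exists_max_image (univ.erase (⊥ : κ → Bool)) (fun z => |g z|)
    ⟨⊤, mem_erase.2 ⟨fun h => Bool.noConfusion (congrFun h t), mem_univ _⟩⟩
  refine ⟨z, ne_of_mem_erase hz, ?_⟩
  have hsum := sum_parity_mul_eq_zero hd hg
  rw [← add_sum_erase univ _ (mem_univ (⊥ : κ → Bool)), add_eq_zero_iff_eq_neg] at hsum
  calc |g ⊥| = |parity (⊥ : κ → Bool) * g ⊥| := by rw [abs_mul, abs_parity, one_mul]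
    _ = |∑ y ∈ univ.erase (⊥ : κ → Bool), parity y * g y| := by rw [hsum, abs_neg]
    _ ≤ ∑ y ∈ univ.erase (⊥ : κ → Bool), |g y| := (abs_sum_le_sum_abs _ _).trans_eq <|
        sum_congr rfl fun y _ => by rw [abs_mul, abs_parity, one_mul]
    _ ≤ #(univ.erase (⊥ : κ → Bool)) • |g z| := sum_le_card_nsmul _ _ _ hmax
    _ ≤ 2 ^ Fintype.card κ * |g z| := by
        rw [nsmul_eq_mul]
        gcongr
        exact_mod_cast (card_le_univ _).trans (by simp)

/-- The indicator function of a finite set, as a point of the cube. -/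
def indicator [DecidableEq ι] (E : Finset ι) : ι → Bool := fun i => decide (i ∈ E)

lemma indicator_empty [DecidableEq ι] : indicator (∅ : Finset ι) = ⊥ := by
  funext i
  simp [indicator]

lemma indicator_filter [Fintype ι] [DecidableEq ι] (x : ι → Bool) : indicator {i | x i} = x := by
  funext i
  simp [indicator]

lemma indicator_insert [DecidableEq ι] {E : Finset ι} {i : ι} (hi : i ∉ E) :
    indicator (insert i E) = indicator E ∆ single i := by
  funext j
  by_cases hj : j = i
  · subst hj
    simp [indicator, single, hi]
  · simp [indicator, symmDiff_single_of_ne _ hj, hj]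

variable [DecidableEq ι] {W : (ι → Bool) → ℝ} {T : ι → Bool} {r : ℝ}

lemma apply_symmDiff_indicator_le (hr : 0 ≤ r)
    (hstep : ∀ S j, S j = T j → W (S ∆ single j) ≤ r * W S) (E : Finset ι) :
    W (T ∆ indicator E) ≤ r ^ #E * W T := by
  induction E using Finset.induction_on with
  | empty => simp [indicator_empty]
  | insert j E hj ih =>
    rw [indicator_insert hj, ← symmDiff_assoc, card_insert_of_notMem hj, pow_succ', mul_assoc]
    have hjT : (T ∆ indicator E) j = T j := by simp [indicator, hj]
    exact (hstep _ j hjT).trans (by gcongr)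

/-- The nonnegative function `W` decays geometrically away from `T`. Unless the decay is slow, its
value at `T` dominates the vanishing parity sum over the points that differ from `T` by a union of
rows `{k} × M`. -/
lemma one_le_of_decay {K M : Type*} [Fintype K] [Fintype M] [DecidableEq K] [DecidableEq M]
    {d : ℕ} (hd : d < Fintype.card K) {W : (K × M → Bool) → ℝ} (hW : W ∈ degreeLE (K × M) d)
    (hW₀ : ∀ S, 0 ≤ W S) (hbot : 0 < W ⊥) {T : K × M → Bool} {r : ℝ} (hr₀ : 0 ≤ r) (hr₁ : r ≤ 1)
    (hstep : ∀ S j, S j = T j → W (S ∆ single j) ≤ r * W S) :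
    1 ≤ 2 ^ Fintype.card K * r ^ Fintype.card M := by
  have hdecay : ∀ S, W (T ∆ S) ≤ r ^ #{j | S j} * W T := fun S => by
    simpa only [indicator_filter] using apply_symmDiff_indicator_le hr₀ hstep {j | S j}
  have hT : 0 < W T := by
    have := hbot.trans_le (symmDiff_self T ▸ hdecay T)
    exact pos_of_mul_pos_right this (by positivity)
  have hrows : (fun v : K → Bool => W (T ∆ (v ∘ Prod.fst))) ∈ degreeLE K d :=
    comp_pullback_mem_degreeLE hW T Prod.fst
  obtain ⟨v, hv, hle⟩ := exists_ne_bot_abs_le hd hrows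
  obtain ⟨k, hk⟩ : ∃ k, v k = true := by
    by_contra! h
    exact hv (funext fun k => by simpa using h k)
  have hcard : Fintype.card M ≤ #{j : K × M | (v ∘ Prod.fst) j} := by
    rw [← card_univ, ← card_map ⟨fun a : M => (k, a), fun _ _ h => congrArg Prod.snd h⟩]
    exact card_le_card fun j hj => by
      obtain ⟨a, -, rfl⟩ := mem_map.1 hj
      exact mem_filter.2 ⟨mem_univ _, hk⟩
  rw [abs_of_nonneg (hW₀ _), abs_of_nonneg (hW₀ _)] at hle
  refine le_of_mul_le_mul_right ?_ hT
  calc 1 * W T = W (T ∆ (⊥ ∘ Prod.fst)) := by rw [one_mul]; exact congrArg W (symmDiff_bot T).symm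
    _ ≤ 2 ^ Fintype.card K * W (T ∆ (v ∘ Prod.fst)) := hle
    _ ≤ 2 ^ Fintype.card K * (r ^ #{j : K × M | (v ∘ Prod.fst) j} * W T) := by
      gcongr
      exact hdecay _
    _ ≤ 2 ^ Fintype.card K * (r ^ Fintype.card M * W T) := by
      gcongr 2 ^ _ * (?_ * _)
      exact pow_le_pow_of_le_one hr₀ hr₁ hcard
    _ = 2 ^ Fintype.card K * r ^ Fintype.card M * W T := by ring

end Decay

/-! ### Stable functions -/

section Stable

variable {R K : Type*}

/-- The union of the rows in `S`, where the row `j` consists of the `(j, t)` with `z j t`. -/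
def rows (z : R → K → Bool) (S : R → Bool) : R × K → Bool := fun w => S w.1 && z w.1 w.2

lemma rows_symmDiff (z : R → K → Bool) (S T : R → Bool) :
    rows z (S ∆ T) = rows z S ∆ rows z T := by
  funext w
  simp [rows, Bool.symmDiff_eq_xor, Bool.and_xor_distrib_right]

lemma disjoint_rows_single [DecidableEq R] (z : R → K → Bool) {S : R → Bool} {j : R}
    (hS : S j = false) : Disjoint (rows z (single j)) (rows z S) := by
  refine Pi.disjoint_iff.2 fun w => ?_
  by_cases hw : w.1 = j <;> simp [rows, single, hw, hS, disjoint_iff]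

/-- The coefficients of the linear inequalities `0 ≤ s`, `(1 + c) * s ≤ t` and `t ≤ (1 - c) * s`,
written as `0 ≤ a * t + b * s`. -/
noncomputable def testCoeffs (c : ℝ) : Finset (ℝ × ℝ) := {(0, 1), (1, -(1 + c)), (-1, 1 - c)}

/-- A test inequality between the values of `g` at `u` and at the origin persists when both points
are moved by some `y` disjoint from `u`. -/
def IsStable (c : ℝ) (g : (κ → Bool) → ℝ) : Prop :=
  ∀ ab ∈ testCoeffs c, ∀ u y, Disjoint u y →
    0 ≤ ab.1 * g u + ab.2 * g ⊥ → 0 ≤ ab.1 * g (y ∆ u) + ab.2 * g y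

variable {c : ℝ} {g : (κ → Bool) → ℝ}

lemma IsStable.nonneg (hg : IsStable c g) (h₀ : 0 ≤ g ⊥) (y : κ → Bool) : 0 ≤ g y := by
  simpa using hg (0, 1) (by simp [testCoeffs]) ⊥ y disjoint_bot_left (by simpa using h₀)

lemma IsStable.mul_le (hg : IsStable c g) {u y : κ → Bool} (huy : Disjoint u y)
    (h : (1 + c) * g ⊥ ≤ g u) : (1 + c) * g y ≤ g (y ∆ u) := by
  have := hg (1, -(1 + c)) (by simp [testCoeffs]) u y huy (by dsimp only; linarith)
  dsimp only at this
  linarith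

lemma IsStable.le_mul (hg : IsStable c g) {u y : κ → Bool} (huy : Disjoint u y)
    (h : g u ≤ (1 - c) * g ⊥) : g (y ∆ u) ≤ (1 - c) * g y := by
  have := hg (-1, 1 - c) (by simp [testCoeffs]) u y huy (by dsimp only; linarith)
  dsimp only at this
  linarith

/-- Every row multiplies `g` by a factor at least `1 + c` or at most `1 - c`, wherever it is added.
Adding the rows of the first kind gives the point from which `g` decays. -/
lemma IsStable.one_le {M : Type*} [Fintype M] [DecidableEq M] [Fintype R]
    [DecidableEq R] {d : ℕ} (hd : d < Fintype.card R) {g : ((R × M) × K → Bool) → ℝ}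
    (hdeg : g ∈ degreeLE _ d) (hg : IsStable c g) (hpos : 0 < g ⊥) (hc : 0 < c)
    {z : R × M → K → Bool} (hz : ∀ j, c * g ⊥ ≤ |g (rows z (single j)) - g ⊥|) :
    1 ≤ 2 ^ Fintype.card R * ((1 + c)⁻¹) ^ Fintype.card M := by
  have hW : (fun S => g (rows z S)) ∈ degreeLE (R × M) d :=
    comp_mem_degreeLE hdeg (rows z) (fun w => {w.1}) (fun w => by simp)
      fun w S T hST => by simp [rows, hST w.1]
  refine one_le_of_decay hd hW (fun S => hg.nonneg hpos.le _) hpos (by positivity)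
    (inv_le_one_of_one_le₀ (by linarith))
    (T := fun j => decide ((1 + c) * g ⊥ ≤ g (rows z (single j)))) fun S j hS => ?_
  by_cases hj : (1 + c) * g ⊥ ≤ g (rows z (single j))
  · rw [le_inv_mul_iff₀ (by linarith)]
    have hdisj := disjoint_rows_single z (S := S ∆ single j) (j := j) (by simp [hS, hj, single])
    simpa [← rows_symmDiff] using hg.mul_le hdisj hj
  · have hdown : g (rows z (single j)) ≤ (1 - c) * g ⊥ := by
      rcases le_abs.1 (hz j) with h | h <;> linarith
    have hdisj := disjoint_rows_single z (S := S) (j := j) (by simp [hS, hj])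
    have hfactor : 1 - c ≤ (1 + c)⁻¹ := by
      rw [← one_div, le_div_iff₀ (by linarith)]
      nlinarith
    rw [rows_symmDiff]
    exact (hg.le_mul hdisj hdown).trans
      (mul_le_mul_of_nonneg_right hfactor (hg.nonneg hpos.le _))

end Stable

/-! ### Planting sensitive coordinates -/

section Plant

variable {R K L Q : Type*} {d : ℕ} {c : ℝ} {p : (ι → Bool) → ℝ} {x : ι → Bool}

/-- The coordinates whose flip at `x` changes the sign of `p`. -/
noncomputable def pivotal [Fintype ι] [DecidableEq ι] (p : (ι → Bool) → ℝ) (x : ι → Bool) :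
    Finset ι :=
  {i | p (x ∆ single i) * p x < 0}

/-- A set of labels in `L`, as a set of labels in `L ⊕ Q`. -/
def special (y : L → Bool) : L ⊕ Q → Bool := Sum.elim y fun _ => false

lemma special_bot : special (⊥ : L → Bool) = (⊥ : L ⊕ Q → Bool) := by
  funext l
  cases l <;> rfl

lemma special_symmDiff (y z : L → Bool) :
    (special (y ∆ z) : L ⊕ Q → Bool) = special y ∆ special z := by
  funext l
  cases l <;> rfl

/-- The restriction of `p` to the subcube through `x` spanned by the blocks of coordinates with a
common label in `L`. -/
def blockRestrict (p : (ι → Bool) → ℝ) (x : ι → Bool) (β : ι → L ⊕ Q) (y : L → Bool) : ℝ :=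
  p (x ∆ (special y ∘ β))

lemma blockRestrict_bot (β : ι → L ⊕ Q) : blockRestrict p x β ⊥ = p x := by
  rw [blockRestrict, special_bot]
  exact congrArg p (symmDiff_bot x)

lemma blockRestrict_mem_degreeLE (hp : p ∈ degreeLE ι d) (x : ι → Bool) (β : ι → L ⊕ Q) :
    blockRestrict p x β ∈ degreeLE L d :=
  comp_mem_degreeLE (comp_pullback_mem_degreeLE hp x β) special
    (Sum.elim (fun l => {l}) fun _ => ∅) (by rintro (l | _) <;> simp)
    (by rintro (l | a) y z h <;> simp_all [special])

/-- Relabel the coordinate `e (j, v j)` by `(j, τ j)`, for each row `j`. -/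
noncomputable def plant (e : R × Q ↪ ι) (v : R → Q) (τ : R → K) (β : ι → (R × K) ⊕ Q) :
    ι → (R × K) ⊕ Q :=
  Function.extend (fun j => e (j, v j)) (fun j => Sum.inl (j, τ j)) β

variable {e : R × Q ↪ ι} {v : R → Q} {τ : R → K} {β : ι → (R × K) ⊕ Q}

lemma plant_apply (j : R) : plant e v τ β (e (j, v j)) = Sum.inl (j, τ j) :=
  Function.Injective.extend_apply (fun _ _ h => congrArg Prod.fst (e.injective h)) _ _ j

lemma plant_apply_of_forall_ne {i : ι} (hi : ∀ j, e (j, v j) ≠ i) : plant e v τ β i = β i :=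
  Function.extend_apply' _ _ _ fun ⟨j, hj⟩ => hi j hj

/-- The coordinates chosen by `e` have no special label. -/
def IsFree (e : R × Q ↪ ι) (β : ι → (R × K) ⊕ Q) : Prop := ∀ w, ∃ a, β (e w) = Sum.inr a

lemma isLeft_plant_iff (hβ : IsFree e β) (w : R × Q) :
    (plant e v τ β (e w)).isLeft ↔ v w.1 = w.2 := by
  by_cases hw : v w.1 = w.2
  · rw [show w = (w.1, v w.1) by rw [hw]]
    simp [plant_apply]
  · obtain ⟨a, ha⟩ := hβ w
    rw [plant_apply_of_forall_ne fun j hj => hw ?_, ha]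
    · simp [hw]
    · rw [← e.injective hj]

lemma eq_of_plant_eq {v' : R → Q} {τ' : R → K} {β' : ι → (R × K) ⊕ Q} (hβ : IsFree e β)
    (hβ' : IsFree e β') (h : plant e v τ β = plant e v' τ' β')
    (hr : ∀ j, β (e (j, v j)) = β' (e (j, v' j))) : v = v' ∧ β = β' := by
  obtain rfl : v = v' := funext fun j => by
    have hj := isLeft_plant_iff (v := v') (τ := τ') hβ' (j, v j)
    rw [← h, isLeft_plant_iff hβ] at hj
    exact (hj.1 rfl).symm
  refine ⟨rfl, funext fun i => ?_⟩
  by_cases hi : ∃ j, e (j, v j) = i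
  · obtain ⟨j, rfl⟩ := hi
    exact hr j
  · push Not at hi
    calc β i = plant e v τ β i := (plant_apply_of_forall_ne hi).symm
      _ = β' i := by rw [h, plant_apply_of_forall_ne hi]

lemma card_isFree [Fintype ι] [DecidableEq ι] [Fintype R] [Fintype K] [Fintype Q]
    [Nonempty Q] (e : R × Q ↪ ι) :
    (#{β : ι → (R × K) ⊕ Q | IsFree e β} : ℝ) =
      (Fintype.card Q / Fintype.card ((R × K) ⊕ Q)) ^ (Fintype.card R * Fintype.card Q) *
        Fintype.card ((R × K) ⊕ Q) ^ Fintype.card ι := by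
  have hpi : univ.filter (IsFree e) = Fintype.piFinset fun i : ι =>
      if i ∈ univ.map e then univ.map (Function.Embedding.inr : Q ↪ (R × K) ⊕ Q) else univ := by
    ext β
    simp only [mem_filter, mem_univ, true_and, Fintype.mem_piFinset, IsFree]
    refine ⟨fun h i => ?_, fun h w => ?_⟩
    · split_ifs with hi
      · obtain ⟨w, -, rfl⟩ := mem_map.1 hi
        obtain ⟨a, ha⟩ := h w
        simp [ha]
      · exact mem_univ _
    · have hw := h (e w)
      rw [if_pos (mem_map_of_mem e (mem_univ w))] at hw
      obtain ⟨a, -, ha⟩ := mem_map.1 hw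
      exact ⟨a, ha.symm⟩
  have hB : (Fintype.card ((R × K) ⊕ Q) : ℝ) ≠ 0 :=
    Nat.cast_ne_zero.2 Fintype.card_ne_zero
  have hprod : ∀ i : ι, ((#(if i ∈ univ.map e then
      univ.map (Function.Embedding.inr : Q ↪ (R × K) ⊕ Q) else univ) : ℕ) : ℝ) =
      (if i ∈ univ.map e then (Fintype.card Q / Fintype.card ((R × K) ⊕ Q) : ℝ) else 1) *
        Fintype.card ((R × K) ⊕ Q) := fun i => by
    split_ifs
    · rw [card_map, card_univ, div_mul_cancel₀ _ hB]
    · rw [card_univ, one_mul]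
  rw [hpi, Fintype.card_piFinset, Nat.cast_prod, prod_congr rfl fun i _ => hprod i,
    prod_mul_distrib, prod_ite_mem, univ_inter, prod_const, prod_const, card_map]
  simp

variable [DecidableEq R]

/-- Each row of labels, suitably thinned out, changes the value of `p` at `x` by a constant
factor. -/
def IsGood (c : ℝ) (p : (ι → Bool) → ℝ) (x : ι → Bool) (β : ι → (R × K) ⊕ Q) : Prop :=
  ∃ z : R → K → Bool, ∀ j, c * |p x| ≤ |blockRestrict p x β (rows z (single j)) - p x|

lemma exists_le_abs_blockRestrict_sub [DecidableEq ι] [Fintype K] (hd : d < Fintype.card K)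
    (hc₀ : 0 ≤ c) (hc₁ : 2 ^ Fintype.card K * c ≤ 1) (hp : p ∈ degreeLE ι d) {i : ι}
    (hi : p (x ∆ single i) * p x < 0) (β : ι → (R × K) ⊕ Q) (j : R) :
    ∃ z : K → Bool, (∃ t, z t = true) ∧
      c * |p x| ≤ |blockRestrict p (x ∆ single i) β (rows (fun _ => z) (single j)) - p x| := by
  have hdeg : (fun z : K → Bool =>
      blockRestrict p (x ∆ single i) β (rows (fun _ => z) (single j)) - p x) ∈ degreeLE K d :=
    sub_mem (comp_mem_degreeLE (blockRestrict_mem_degreeLE hp (x ∆ single i) β)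
        (fun z => rows (fun _ => z) (single j)) (fun w => {w.2}) (fun w => by simp)
        fun w y z h => by simp [rows, h w.2])
      (mem_degreeLE_of_dependsOn (S := ∅) (by simp) fun _ _ _ => rfl)
  obtain ⟨z, hz, hle⟩ := exists_ne_bot_abs_le hd hdeg
  have hrow : rows (fun _ : R => (⊥ : K → Bool)) (single j) = ⊥ := by
    funext w
    simp [rows]
  rw [hrow, blockRestrict_bot] at hle
  refine ⟨z, ?_, ?_⟩
  · by_contra! h
    exact hz (funext fun t => by simpa using h t)
  have hflip : |p x| ≤ |p (x ∆ single i) - p x| := sq_le_sq.1 (by nlinarith)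
  calc c * |p x| ≤ c * (2 ^ Fintype.card K *
        |blockRestrict p (x ∆ single i) β (rows (fun _ => z) (single j)) - p x|) := by
        gcongr
        exact hflip.trans hle
    _ = 2 ^ Fintype.card K * c *
        |blockRestrict p (x ∆ single i) β (rows (fun _ => z) (single j)) - p x| := by ring
    _ ≤ _ := mul_le_of_le_one_left (abs_nonneg _) hc₁

lemma special_rows_comp_plant [DecidableEq ι] (hβ : IsFree e β) {z : R → K → Bool} {j : R}
    (hz : z j (τ j) = true) :
    special (rows z (single j)) ∘ plant e v τ β =
      single (e (j, v j)) ∆ (special (rows z (single j)) ∘ β) := by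
  funext i
  by_cases hi : ∃ j', e (j', v j') = i
  · obtain ⟨j', rfl⟩ := hi
    obtain ⟨a, ha⟩ := hβ (j', v j')
    by_cases hj : j' = j
    · subst hj
      simp [plant_apply, special, rows, single, ha, hz]
    · simp [plant_apply, special, rows, single, ha, hj]
  · push Not at hi
    simp [plant_apply_of_forall_ne hi, single, (hi j).symm, Bool.symmDiff_eq_xor]

lemma exists_isGood_plant [DecidableEq ι] [Fintype K] (hd : d < Fintype.card K) (hc₀ : 0 ≤ c)
    (hc₁ : 2 ^ Fintype.card K * c ≤ 1) (hp : p ∈ degreeLE ι d)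
    (he : ∀ w, p (x ∆ single (e w)) * p x < 0) (hβ : IsFree e β) (v : R → Q) :
    ∃ τ : R → K, IsGood c p x (plant e v τ β) := by
  choose z hz hle using fun j =>
    exists_le_abs_blockRestrict_sub hd hc₀ hc₁ hp (he (j, v j)) β j
  choose τ hτ using hz
  refine ⟨τ, z, fun j => ?_⟩
  have hrow : rows (fun _ => z j) (single j) = rows z (single j) := by
    funext w
    by_cases hw : w.1 = j <;> simp [rows, single, hw]
  rw [blockRestrict, special_rows_comp_plant hβ (hτ j), ← symmDiff_assoc, ← hrow]
  exact hle j

variable [Fintype ι] [DecidableEq ι] [Fintype R] [Fintype K] [Fintype Q]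

/-- The pairs of a planting position `v` and a free labelling embed into the pairs of a good
labelling and a tuple of overwritten labels. -/
lemma card_isFree_le_card_isGood [Nonempty Q] (hd : d < Fintype.card K) (hc₀ : 0 ≤ c)
    (hc₁ : 2 ^ Fintype.card K * c ≤ 1) (hp : p ∈ degreeLE ι d)
    (he : ∀ w, p (x ∆ single (e w)) * p x < 0) :
    #{β : ι → (R × K) ⊕ Q | IsFree e β} ≤ #{β : ι → (R × K) ⊕ Q | IsGood c p x β} := by
  have : Nonempty K := Fintype.card_pos_iff.1 (Nat.zero_lt_of_lt hd)
  choose! τ hτ using fun (v : R → Q) (β : ι → (R × K) ⊕ Q) (hβ : IsFree e β) =>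
    exists_isGood_plant hd hc₀ hc₁ hp he hβ v
  let F : (ι → (R × K) ⊕ Q) × (R → Q) → (ι → (R × K) ⊕ Q) × (R → Q) := fun u =>
    (plant e u.2 (τ u.2 u.1) u.1, fun j => Sum.elim (fun _ => u.2 j) id (u.1 (e (j, u.2 j))))
  have hcard : #(({β | IsFree e β} : Finset (ι → (R × K) ⊕ Q)) ×ˢ (univ : Finset (R → Q))) ≤
      #(({β | IsGood c p x β} : Finset (ι → (R × K) ⊕ Q)) ×ˢ (univ : Finset (R → Q))) := by
    refine card_le_card_of_injOn F (fun u hu => ?_) ?_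
    · simp_all [F]
    · rintro ⟨β, v⟩ hu ⟨β', v'⟩ hu' hF
      have hβ : IsFree e β := by simpa using hu
      have hβ' : IsFree e β' := by simpa using hu'
      obtain ⟨hplant, hover⟩ := Prod.mk.inj hF
      obtain ⟨rfl, rfl⟩ := eq_of_plant_eq hβ hβ' hplant fun j => by
        obtain ⟨a, ha⟩ := hβ (j, v j)
        obtain ⟨a', ha'⟩ := hβ' (j, v' j)
        have := congrFun hover j
        simp_all
      rfl
  rw [card_product, card_product] at hcard
  exact Nat.le_of_mul_le_mul_right hcard (card_pos.2 univ_nonempty)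

lemma exp_neg_mul_le_div_pow {q : ℕ} (hq : 0 < q) (m N : ℕ) :
    Real.exp (-(m * N : ℕ)) ≤ (q / (N + q : ℕ) : ℝ) ^ (m * q) := by
  have : (0 : ℝ) < q := by exact_mod_cast hq
  have hbase : Real.exp (-(N / q)) ≤ q / (N + q : ℕ) := by
    rw [Real.exp_neg, inv_le_comm₀ (Real.exp_pos _) (by positivity), inv_div]
    calc ((N + q : ℕ) : ℝ) / q = N / q + 1 := by push_cast; field_simp
      _ ≤ Real.exp (N / q) := Real.add_one_le_exp _
  calc Real.exp (-(m * N : ℕ)) = Real.exp (-(N / q)) ^ (m * q) := by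
        rw [← Real.exp_nat_mul]
        congr 1
        push_cast
        field_simp
    _ ≤ _ := by gcongr

lemma exp_neg_mul_card_le_card_isGood [Nonempty Q] (hd : d < Fintype.card K) (hc₀ : 0 ≤ c)
    (hc₁ : 2 ^ Fintype.card K * c ≤ 1) (hp : p ∈ degreeLE ι d)
    (hs : Fintype.card R * Fintype.card Q ≤ #(pivotal p x)) :
    Real.exp (-(Fintype.card R * Fintype.card (R × K) : ℕ)) *
        Fintype.card ((R × K) ⊕ Q) ^ Fintype.card ι ≤
      #{β : ι → (R × K) ⊕ Q | IsGood c p x β} := by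
  obtain ⟨e⟩ : Nonempty (R × Q ↪ pivotal p x) :=
    Function.Embedding.nonempty_of_card_le (by rwa [Fintype.card_prod, Fintype.card_coe])
  let e' : R × Q ↪ ι := e.trans (Function.Embedding.subtype _)
  have he : ∀ w, p (x ∆ single (e' w)) * p x < 0 := fun w => (mem_filter.1 (e w).2).2
  calc _ ≤ (Fintype.card Q / (Fintype.card (R × K) + Fintype.card Q : ℕ) : ℝ) ^
        (Fintype.card R * Fintype.card Q) * Fintype.card ((R × K) ⊕ Q) ^ Fintype.card ι := by
        gcongr
        exact exp_neg_mul_le_div_pow Fintype.card_pos _ _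
    _ = #{β : ι → (R × K) ⊕ Q | IsFree e' β} := by rw [card_isFree, Fintype.card_sum]
    _ ≤ _ := by exact_mod_cast card_isFree_le_card_isGood hd hc₀ hc₁ hp he

end Plant

/-! ### Random labellings are stable -/

section Test

variable {L Q : Type*}

/-- The tests in the definition of `IsStable`: the coefficients of an inequality, the point `u` and
the displacement `y`. -/
noncomputable def stabilityTests (c : ℝ) (L : Type*) [Fintype L] [DecidableEq L] :
    Finset ((ℝ × ℝ) × (L → Bool) × (L → Bool)) :=
  testCoeffs c ×ˢ ({uy | Disjoint uy.1 uy.2} : Finset ((L → Bool) × (L → Bool)))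

/-- Four times the number of stability tests whose truth value changes. -/
noncomputable def testChange [Fintype L] [DecidableEq L] (c : ℝ) (p : (ι → Bool) → ℝ)
    (β : ι → L ⊕ Q) (x : ι → Bool) : ℝ :=
  ∑ t ∈ stabilityTests c L, (linTest p (special t.2.1) t.1.1 t.1.2 β x -
    linTest p (special t.2.1) t.1.1 t.1.2 β (x ∆ (special t.2.2 ∘ β))) ^ 2

lemma testChange_nonneg [Fintype L] [DecidableEq L] (c : ℝ) (p : (ι → Bool) → ℝ)
    (β : ι → L ⊕ Q) (x : ι → Bool) : 0 ≤ testChange c p β x :=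
  sum_nonneg fun _ _ => sq_nonneg _

lemma nonneg_of_sgn_sub_sgn_sq_lt {a b : ℝ} (ha : 0 ≤ a) (h : (sgn a - sgn b) ^ 2 < 4) :
    0 ≤ b := by
  by_contra! hb
  rw [sgn_of_nonneg ha, sgn_of_neg hb] at h
  norm_num at h

lemma isStable_of_testChange_lt [Fintype L] [DecidableEq L] {c : ℝ} {p : (ι → Bool) → ℝ}
    {β : ι → L ⊕ Q} {x : ι → Bool} (h : testChange c p β x < 4) :
    IsStable c (blockRestrict p x β) := by
  intro ab hab u y huy hnonneg
  rw [blockRestrict_bot] at hnonneg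
  have ht : (ab, u, y) ∈ stabilityTests c L := by simp [stabilityTests, hab, huy]
  have hle := single_le_sum (f := fun t : (ℝ × ℝ) × (L → Bool) × (L → Bool) =>
    (linTest p (special t.2.1) t.1.1 t.1.2 β x -
      linTest p (special t.2.1) t.1.1 t.1.2 β (x ∆ (special t.2.2 ∘ β))) ^ 2)
    (fun _ _ => sq_nonneg _) ht
  have hy := nonneg_of_sgn_sub_sgn_sq_lt hnonneg (hle.trans_lt h)
  rwa [symmDiff_assoc, ← symmDiff_comp, ← special_symmDiff] at hy

lemma sq_sub_le_of_sq_eq_one {a b c : ℝ} (ha : a ^ 2 = 1) (hb : b ^ 2 = 1) (hc : c ^ 2 = 1) :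
    (a - c) ^ 2 ≤ (a - b) ^ 2 + (b - c) ^ 2 := by
  rcases sq_eq_one_iff.1 ha with rfl | rfl <;> rcases sq_eq_one_iff.1 hb with rfl | rfl <;>
    rcases sq_eq_one_iff.1 hc with rfl | rfl <;> norm_num

variable [Fintype ι] [DecidableEq ι] [Fintype B] [DecidableEq B]

lemma blockInfluence_indicator_le {F : (ι → B) → (ι → Bool) → ℝ} (hF : ∀ β x, F β x ^ 2 = 1)
    (E : Finset B) :
    blockInfluence F (indicator E) ≤ ∑ l ∈ E, blockInfluence F (single l) := by
  induction E using Finset.induction_on with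
  | empty =>
    refine (expect_eq_zero fun β _ => expect_eq_zero fun x _ => ?_).le
    rw [indicator_empty, show (⊥ : B → Bool) ∘ β = ⊥ from rfl, symmDiff_bot, sub_self,
      zero_pow two_ne_zero]
  | insert l E hl ih =>
    rw [sum_insert hl, add_comm]
    refine le_trans ?_ (add_le_add_left ih _)
    have hshift : blockInfluence F (single l) = 𝔼 β : ι → B, 𝔼 x,
        (F β (x ∆ (indicator E ∘ β)) - F β (x ∆ (indicator (insert l E) ∘ β))) ^ 2 := by
      refine expect_congr rfl fun β _ => ?_
      rw [← expect_symmDiff_right (indicator E ∘ β)]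
      simp only [indicator_insert hl, symmDiff_comp, symmDiff_assoc]
    rw [hshift, blockInfluence, blockInfluence]
    simp only [← expect_add_distrib]
    gcongr with β _ x _
    exact sq_sub_le_of_sq_eq_one (hF _ _) (hF _ _) (hF _ _)

end Test

section TestEnergy

variable [Fintype ι] [DecidableEq ι] {L Q : Type} [Fintype L] [Fintype Q]
  {d N : ℕ} {X c : ℝ} {p : (ι → Bool) → ℝ}

lemma card_special_le (y : L → Bool) : #{l : L ⊕ Q | special y l} ≤ Fintype.card L := by
  refine (card_le_card fun l hl => ?_).trans_eq ((card_map .inl).trans card_univ)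
  rcases l with l | a
  · simp
  · exact absurd (mem_filter.1 hl).2 Bool.false_ne_true

lemma card_le_card_special_eq_false (u : L → Bool) :
    Fintype.card Q ≤ #{l : L ⊕ Q | special u l = false} := by
  rw [← card_univ, ← card_map .inr]
  refine card_le_card fun l hl => ?_
  obtain ⟨a, -, rfl⟩ := mem_map.1 hl
  exact mem_filter.2 ⟨mem_univ _, rfl⟩

lemma card_mul_blockInfluence_special_le (hX : EnergyBound d N X) (hX₀ : 0 ≤ X)
    (hN : Fintype.card (L ⊕ Q) ≤ N) (hp : p ∈ degreeLE ι d) {u y : L → Bool}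
    (huy : Disjoint u y) (a b : ℝ) :
    Fintype.card Q * blockInfluence (linTest p (special u : L ⊕ Q → Bool) a b) (special y) ≤
      Fintype.card L * (X * √(Fintype.card (L ⊕ Q))) := by
  have hlabel : ∀ l ∈ ({l | special y l} : Finset (L ⊕ Q)), Fintype.card Q *
      blockInfluence (linTest p (special u) a b) (single l) ≤ X * √(Fintype.card (L ⊕ Q)) := by
    intro l hl
    have hul : special u l = false := by
      rcases l with l | a
      · have hy : y l = true := (mem_filter.1 hl).2
        simpa [special, hy] using congrFun (disjoint_iff.1 huy) l
      · rfl
    refine le_trans ?_ (card_mul_blockInfluence_linTest_le hX hN hp a b hul)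
    gcongr
    · exact blockInfluence_nonneg _ _
    · exact card_le_card_special_eq_false u
  calc (Fintype.card Q : ℝ) * blockInfluence (linTest p (special u) a b) (special y)
      ≤ Fintype.card Q *
          ∑ l with special y l, blockInfluence (linTest p (special u) a b) (single l) := by
        gcongr
        conv_lhs => rw [← indicator_filter (special y)]
        exact blockInfluence_indicator_le (F := linTest p (special u) a b) (fun _ _ => sgn_sq _) _
    _ ≤ #{l : L ⊕ Q | special y l} • (X * √(Fintype.card (L ⊕ Q))) := by
        rw [mul_sum]
        exact sum_le_card_nsmul _ _ _ hlabel
    _ ≤ _ := by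
        rw [nsmul_eq_mul]
        gcongr
        exact card_special_le y

lemma card_mul_expect_testChange_le [DecidableEq L] (hX : EnergyBound d N X) (hX₀ : 0 ≤ X)
    (hN : Fintype.card (L ⊕ Q) ≤ N) (hp : p ∈ degreeLE ι d) :
    Fintype.card Q * 𝔼 x, 𝔼 β : ι → L ⊕ Q, testChange c p β x ≤
      #(stabilityTests c L) * (Fintype.card L * (X * √(Fintype.card (L ⊕ Q)))) := by
  have hsum : 𝔼 x, 𝔼 β : ι → L ⊕ Q, testChange c p β x = ∑ t ∈ stabilityTests c L,
      blockInfluence (linTest p (special t.2.1 : L ⊕ Q → Bool) t.1.1 t.1.2) (special t.2.2) := by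
    rw [expect_comm]
    simp only [testChange, expect_sum_comm]
    rfl
  rw [hsum, mul_sum, ← nsmul_eq_mul]
  refine sum_le_card_nsmul _ _ _ fun t ht => ?_
  have huy : Disjoint t.2.1 t.2.2 := (mem_filter.1 (mem_product.1 ht).2).2
  exact card_mul_blockInfluence_special_le hX hX₀ hN hp huy _ _

end TestEnergy

/-! ### The tail of the sensitivity -/

lemma four_le_testChange_of_isGood {R M K Q : Type*} [Fintype R] [DecidableEq R] [Fintype M]
    [DecidableEq M] [Fintype K] [DecidableEq K] {c : ℝ} {d : ℕ} (hd : d < Fintype.card R)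
    (hc : 0 < c) (hlt : 2 ^ Fintype.card R * ((1 + c)⁻¹) ^ Fintype.card M < 1)
    {p : (ι → Bool) → ℝ} (hp : p ∈ degreeLE ι d)
    {x : ι → Bool} (hx : 0 < p x) {β : ι → ((R × M) × K) ⊕ Q} (hβ : IsGood c p x β) :
    4 ≤ testChange c p β x := by
  by_contra! hlow
  obtain ⟨z, hz⟩ := hβ
  refine hlt.not_ge ((isStable_of_testChange_lt hlow).one_le hd
    (blockRestrict_mem_degreeLE hp x β) (z := z) ?_ hc fun j => ?_)
  · rwa [blockRestrict_bot]
  · simpa only [blockRestrict_bot, abs_of_pos hx] using hz j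

section Tail

variable [Fintype ι] [DecidableEq ι] {d : ℕ} {p : (ι → Bool) → ℝ}

lemma pivotal_neg (p : (ι → Bool) → ℝ) (x : ι → Bool) : pivotal (-p) x = pivotal p x := by
  simp [pivotal]

/-- The probability that at least `s` coordinates are pivotal. -/
noncomputable def pivotalTail (p : (ι → Bool) → ℝ) (s : ℕ) : ℝ :=
  𝔼 x, if s ≤ #(pivotal p x) then 1 else 0

lemma pivotalTail_nonneg (p : (ι → Bool) → ℝ) (s : ℕ) : 0 ≤ pivotalTail p s :=
  expect_nonneg fun x _ => by positivity

lemma pivotalTail_le_one (p : (ι → Bool) → ℝ) (s : ℕ) : pivotalTail p s ≤ 1 :=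
  expect_le univ_nonempty fun x _ => by split_ifs <;> norm_num

lemma pivotalTail_anti (p : (ι → Bool) → ℝ) {s t : ℕ} (hst : s ≤ t) :
    pivotalTail p t ≤ pivotalTail p s :=
  expect_le_expect fun x _ => by split_ifs <;> first | omega | norm_num

section Labels

variable {R M K Q : Type*} [Fintype R] [DecidableEq R] [Fintype M] [DecidableEq M] [Fintype K]
  [DecidableEq K] [Fintype Q] {c : ℝ}

lemma exp_neg_le_expect_testChange [Nonempty Q] (hR : d < Fintype.card R) (hK : d < Fintype.card K)
    (hc₀ : 0 < c) (hc₁ : 2 ^ Fintype.card K * c ≤ 1)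
    (hlt : 2 ^ Fintype.card R * ((1 + c)⁻¹) ^ Fintype.card M < 1) (hp : p ∈ degreeLE ι d)
    {x : ι → Bool} (hx : 0 < p x)
    (hs : Fintype.card (R × M) * Fintype.card Q ≤ #(pivotal p x)) :
    4 * Real.exp (-(Fintype.card (R × M) * Fintype.card ((R × M) × K) : ℕ)) ≤
      𝔼 β : ι → ((R × M) × K) ⊕ Q, testChange c p β x := by
  have : (0 : ℝ) < Fintype.card (((R × M) × K) ⊕ Q) := by
    exact_mod_cast Fintype.card_pos
  calc 4 * Real.exp (-(Fintype.card (R × M) * Fintype.card ((R × M) × K) : ℕ))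
      ≤ 4 * (#{β : ι → ((R × M) × K) ⊕ Q | IsGood c p x β} /
          Fintype.card (((R × M) × K) ⊕ Q) ^ Fintype.card ι) := by
        gcongr
        rw [le_div_iff₀ (by positivity)]
        exact exp_neg_mul_card_le_card_isGood hK hc₀.le hc₁ hp hs
    _ = 𝔼 β : ι → ((R × M) × K) ⊕ Q, if IsGood c p x β then 4 else 0 := by
        rw [Fintype.expect_eq_sum_div_card, ← sum_filter, sum_const, nsmul_eq_mul, Fintype.card_fun]
        push_cast
        ring
    _ ≤ 𝔼 β : ι → ((R × M) × K) ⊕ Q, testChange c p β x := by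
        gcongr with β _
        split_ifs with hβ
        · exact four_le_testChange_of_isGood hR hc₀ hlt hp hx hβ
        · exact testChange_nonneg _ _ _ _

end Labels

section Markov

variable {R M K Q : Type} [Fintype R] [DecidableEq R] [Fintype M] [DecidableEq M] [Fintype K]
  [DecidableEq K] [Fintype Q] [Nonempty Q] {c X : ℝ} {N : ℕ}

lemma card_mul_expect_pos_pivotal_le (hR : d < Fintype.card R) (hK : d < Fintype.card K)
    (hc₀ : 0 < c) (hc₁ : 2 ^ Fintype.card K * c ≤ 1)
    (hlt : 2 ^ Fintype.card R * ((1 + c)⁻¹) ^ Fintype.card M < 1)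
    (hX : EnergyBound d N X) (hX₀ : 0 ≤ X) (hN : Fintype.card (((R × M) × K) ⊕ Q) ≤ N)
    (hp : p ∈ degreeLE ι d) :
    Fintype.card Q * (4 * Real.exp (-(Fintype.card (R × M) * Fintype.card ((R × M) × K) : ℕ)) *
        𝔼 x, if 0 < p x ∧ Fintype.card (R × M) * Fintype.card Q ≤ #(pivotal p x) then 1 else 0) ≤
      #(stabilityTests c ((R × M) × K)) *
        (Fintype.card ((R × M) × K) * (X * √(Fintype.card (((R × M) × K) ⊕ Q)))) := by
  refine le_trans ?_ (card_mul_expect_testChange_le hX hX₀ hN hp)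
  rw [mul_expect]
  gcongr with x _
  split_ifs with hx
  · rw [mul_one]
    exact exp_neg_le_expect_testChange hR hK hc₀ hc₁ hlt hp hx.1 hx.2
  · rw [mul_zero]
    exact expect_nonneg fun β _ => testChange_nonneg _ _ _ _

lemma card_mul_pivotalTail_le (hR : d < Fintype.card R) (hK : d < Fintype.card K)
    (hc₀ : 0 < c) (hc₁ : 2 ^ Fintype.card K * c ≤ 1)
    (hlt : 2 ^ Fintype.card R * ((1 + c)⁻¹) ^ Fintype.card M < 1)
    (hX : EnergyBound d N X) (hX₀ : 0 ≤ X) (hN : Fintype.card (((R × M) × K) ⊕ Q) ≤ N)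
    (hp : p ∈ degreeLE ι d) (hp₀ : ∀ x, p x ≠ 0) :
    Fintype.card Q * (2 * Real.exp (-(Fintype.card (R × M) * Fintype.card ((R × M) × K) : ℕ)) *
        pivotalTail p (Fintype.card (R × M) * Fintype.card Q)) ≤
      #(stabilityTests c ((R × M) × K)) *
        (Fintype.card ((R × M) × K) * (X * √(Fintype.card (((R × M) × K) ⊕ Q)))) := by
  have hpos := card_mul_expect_pos_pivotal_le (Q := Q) hR hK hc₀ hc₁ hlt hX hX₀ hN hp
  have hneg := card_mul_expect_pos_pivotal_le (Q := Q) hR hK hc₀ hc₁ hlt hX hX₀ hN (neg_mem hp)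
  have hsplit : pivotalTail p (Fintype.card (R × M) * Fintype.card Q) =
      (𝔼 x, if 0 < p x ∧ Fintype.card (R × M) * Fintype.card Q ≤ #(pivotal p x) then 1 else 0) +
      𝔼 x, if 0 < (-p) x ∧ Fintype.card (R × M) * Fintype.card Q ≤ #(pivotal (-p) x)
        then 1 else 0 := by
    rw [pivotalTail, ← expect_add_distrib]
    refine expect_congr rfl fun x _ => ?_
    simp only [pivotal_neg, Pi.neg_apply, neg_pos]
    rcases (hp₀ x).lt_or_gt with hx | hx <;> simp [hx, hx.not_gt]
  rw [hsplit]
  linarith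

lemma sqrt_card_mul_pivotalTail_le (hR : d < Fintype.card R) (hK : d < Fintype.card K)
    (hc₀ : 0 < c) (hc₁ : 2 ^ Fintype.card K * c ≤ 1)
    (hlt : 2 ^ Fintype.card R * ((1 + c)⁻¹) ^ Fintype.card M < 1)
    (hX : EnergyBound d N X) (hX₀ : 0 ≤ X) (hN : Fintype.card (((R × M) × K) ⊕ Q) ≤ N)
    (hp : p ∈ degreeLE ι d) (hp₀ : ∀ x, p x ≠ 0) :
    √(Fintype.card Q) * (2 * Real.exp (-(Fintype.card (R × M) * Fintype.card ((R × M) × K) : ℕ)) *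
        pivotalTail p (Fintype.card (R × M) * Fintype.card Q)) ≤
      #(stabilityTests c ((R × M) × K)) *
        (Fintype.card ((R × M) × K) * (X * √(Fintype.card ((R × M) × K) + 1))) := by
  have hQ : (1 : ℝ) ≤ Fintype.card Q := by exact_mod_cast Fintype.card_pos (α := Q)
  have hsqrt : √(Fintype.card (((R × M) × K) ⊕ Q)) ≤
      √(Fintype.card ((R × M) × K) + 1) * √(Fintype.card Q) := by
    rw [← Real.sqrt_mul (by positivity), Fintype.card_sum]
    gcongr
    push_cast
    nlinarith
  refine le_of_mul_le_mul_left ?_ (Real.sqrt_pos.2 (zero_lt_one.trans_le hQ))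
  rw [← mul_assoc, Real.mul_self_sqrt (Nat.cast_nonneg _)]
  refine (card_mul_pivotalTail_le hR hK hc₀ hc₁ hlt hX hX₀ hN hp hp₀).trans ?_
  calc _ ≤ #(stabilityTests c ((R × M) × K)) * (Fintype.card ((R × M) × K) *
        (X * (√(Fintype.card ((R × M) × K) + 1) * √(Fintype.card Q)))) := by gcongr
    _ = _ := by ring

end Markov

end Tail

lemma exists_sqrt_mul_pivotalTail_le (d : ℕ) : ∃ A ≥ 0, ∃ T > 0, ∃ N₀ : ℕ, ∀ {ι : Type*} [Fintype ι]
    [DecidableEq ι] {p : (ι → Bool) → ℝ} {X : ℝ} {q : ℕ}, p ∈ degreeLE ι d → (∀ x, p x ≠ 0) →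
    EnergyBound d (N₀ + q) X → 0 ≤ X → 0 < q →
    √q * pivotalTail p (T * q) ≤ A * X := by
  let c : ℝ := (1 / 2) ^ (d + 1)
  have hc₁ : 2 ^ (d + 1) * c ≤ 1 := by
    rw [← mul_pow]
    norm_num
  obtain ⟨m, hm⟩ : ∃ m : ℕ, ((1 + c)⁻¹) ^ m < c :=
    exists_pow_lt_of_lt_one (by positivity)
      (inv_lt_one_of_one_lt₀ (lt_add_of_pos_right 1 (by positivity)))
  have hlt : 2 ^ (d + 1) * ((1 + c)⁻¹) ^ m < 1 :=
    (mul_lt_mul_of_pos_left hm (by positivity)).trans_le hc₁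
  have hm₀ : 0 < m := by
    rw [Nat.pos_iff_ne_zero]
    rintro rfl
    exact hm.not_ge (pow_le_one₀ (by norm_num) (by norm_num))
  let L := (Fin (d + 1) × Fin m) × Fin (d + 1)
  let E := Real.exp (-(Fintype.card (Fin (d + 1) × Fin m) * Fintype.card L : ℕ))
  refine ⟨#(stabilityTests c L) * (Fintype.card L * √(Fintype.card L + 1)) / (2 * E), by positivity,
    (d + 1) * m, by positivity, Fintype.card L, fun {ι _ _ p X q} hp hp₀ hX hX₀ hq => ?_⟩
  have : NeZero q := ⟨hq.ne'⟩
  have htail := sqrt_card_mul_pivotalTail_le (R := Fin (d + 1)) (M := Fin m) (K := Fin (d + 1))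
    (Q := Fin q) (c := c) (by simp) (by simp) (by positivity) (by rwa [Fintype.card_fin])
    (by rwa [Fintype.card_fin, Fintype.card_fin]) hX hX₀ (by simp [L]) hp hp₀
  have hcard : Fintype.card (Fin (d + 1) × Fin m) = (d + 1) * m := by simp
  rw [div_mul_eq_mul_div, le_div_iff₀ (by positivity), ← hcard]
  rw [Fintype.card_fin q] at htail
  linarith

lemma exists_pivotalTail_le_div_sqrt (d : ℕ) : ∃ C > 0, ∃ N₀ : ℕ, ∀ {ι : Type*} [Fintype ι]
    [DecidableEq ι] {p : (ι → Bool) → ℝ} {X : ℝ} {s : ℕ}, p ∈ degreeLE ι d → (∀ x, p x ≠ 0) →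
    EnergyBound d (N₀ + Fintype.card ι) X → 1 ≤ X → 0 < s → s ≤ Fintype.card ι →
    pivotalTail p s ≤ C * X / √s := by
  obtain ⟨A, hA, T, hT, N₀, h⟩ := exists_sqrt_mul_pivotalTail_le d
  refine ⟨√T + √(2 * T) * A, by positivity, N₀,
    fun {ι _ _ p X s} hp hp₀ hX hX₁ hs hsι => ?_⟩
  rw [le_div_iff₀ (by positivity)]
  rcases lt_or_ge s T with hlt | hge
  · calc pivotalTail p s * √s ≤ 1 * √T := by
          gcongr
          exact pivotalTail_le_one p s
      _ ≤ √T * X := by rw [one_mul]; exact le_mul_of_one_le_right (by positivity) hX₁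
      _ ≤ _ := by gcongr; exact le_add_of_nonneg_right (by positivity)
  have hq : 0 < s / T := Nat.div_pos hge hT
  have hsq : (s : ℝ) ≤ 2 * T * (s / T : ℕ) := by
    have := Nat.lt_div_mul_add hT (a := s)
    have : s ≤ 2 * T * (s / T) := by nlinarith
    exact_mod_cast this
  have hqn : N₀ + s / T ≤ N₀ + Fintype.card ι := by
    gcongr
    exact (Nat.div_le_self s T).trans hsι
  calc pivotalTail p s * √s ≤ pivotalTail p (T * (s / T)) * √(2 * T * (s / T : ℕ)) := by
        gcongr
        · exact pivotalTail_nonneg _ _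
        · exact pivotalTail_anti p (Nat.mul_div_le s T)
    _ = √(2 * T) * (√(s / T : ℕ) * pivotalTail p (T * (s / T))) := by
        rw [Real.sqrt_mul (by positivity)]
        ring
    _ ≤ √(2 * T) * (A * X) := by
        refine mul_le_mul_of_nonneg_left ?_ (Real.sqrt_nonneg _)
        exact h hp hp₀ (fun κ _ _ hκ => hX κ (hκ.trans hqn)) (zero_le_one.trans hX₁) hq
    _ ≤ (√T + √(2 * T) * A) * X := by
        rw [← mul_assoc]
        gcongr
        exact le_add_of_nonneg_left (by positivity)

/-! ### Boolean surface area -/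

lemma sqrt_natCast_le_sum (s : ℕ) : √s ≤ ∑ m ∈ range s, 1 / √(m + 1) := by
  induction s with
  | zero => simp
  | succ s ih =>
    have hstep : √(s + 1) ≤ √s + 1 / √(s + 1) := by
      have hpos : 0 < √((s : ℝ) + 1) := Real.sqrt_pos.2 (by positivity)
      rw [← sub_le_iff_le_add', le_div_iff₀ hpos, sub_mul, Real.mul_self_sqrt (by positivity)]
      have : √s * √s ≤ √s * √((s : ℝ) + 1) := by
        gcongr
        linarith
      rw [Real.mul_self_sqrt (Nat.cast_nonneg s)] at this
      linarith
    rw [sum_range_succ, Nat.cast_succ]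
    linarith

lemma expect_sqrt_card_pivotal_le [Fintype ι] [DecidableEq ι] (p : (ι → Bool) → ℝ) :
    𝔼 x, √(#(pivotal p x)) ≤
      ∑ m ∈ range (Fintype.card ι), 1 / √(m + 1) * pivotalTail p (m + 1) := by
  simp only [pivotalTail, mul_expect, ← expect_sum_comm]
  refine expect_le_expect fun x _ => (sqrt_natCast_le_sum _).trans_eq ?_
  rw [← sum_subset (range_subset_range.2 (card_le_univ (pivotal p x))) fun m _ hm => ?_]
  · refine sum_congr rfl fun m hm => ?_
    rw [if_pos (Nat.succ_le_of_lt (mem_range.1 hm)), mul_one]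
  · rw [if_neg (by simpa using hm), mul_zero]

lemma exists_expect_sqrt_card_pivotal_le (d : ℕ) : ∃ C > 0, ∃ N₀ : ℕ, ∀ {ι : Type*} [Fintype ι]
    [DecidableEq ι] {p : (ι → Bool) → ℝ} {X : ℝ}, p ∈ degreeLE ι d → (∀ x, p x ≠ 0) →
    EnergyBound d (N₀ + Fintype.card ι) X → 1 ≤ X →
    𝔼 x, √(#(pivotal p x)) ≤ C * X * (1 + Real.log (Fintype.card ι)) := by
  obtain ⟨C, hC, N₀, h⟩ := exists_pivotalTail_le_div_sqrt d
  refine ⟨C, hC, N₀, fun {ι _ _ p X} hp hp₀ hX hX₁ => ?_⟩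
  calc 𝔼 x, √(#(pivotal p x))
      ≤ ∑ m ∈ range (Fintype.card ι), 1 / √(m + 1) * pivotalTail p (m + 1) :=
        expect_sqrt_card_pivotal_le p
    _ ≤ ∑ m ∈ range (Fintype.card ι), 1 / √(m + 1) * (C * X / √(m + 1)) := by
        gcongr with m hm
        exact_mod_cast h hp hp₀ hX hX₁ m.succ_pos (Nat.succ_le_of_lt (mem_range.1 hm))
    _ = C * X * (harmonic (Fintype.card ι) : ℚ) := by
        rw [harmonic, Rat.cast_sum, mul_sum]
        refine sum_congr rfl fun m _ => ?_
        rw [div_mul_div_comm, Real.mul_self_sqrt (by positivity)]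
        push_cast
        ring
    _ ≤ C * X * (1 + Real.log (Fintype.card ι)) := by
        gcongr
        exact harmonic_le_one_add_log _

lemma flipAt_eq_symmDiff_single {n : ℕ} (x : Fin n → Bool) (i : Fin n) :
    flipAt x i = x ∆ single i := by
  funext j
  by_cases h : j = i
  · subst h
    rw [symmDiff_single_self, flipAt, Function.update_self]
  · rw [symmDiff_single_of_ne x h, flipAt, Function.update_of_ne h]

lemma sign_ne_sign_iff {a b : ℝ} (ha : a ≠ 0) (hb : b ≠ 0) :
    Real.sign a ≠ Real.sign b ↔ a * b < 0 := by
  rcases ha.lt_or_gt with ha | ha <;> rcases hb.lt_or_gt with hb | hb <;>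
    simp only [Real.sign_of_neg, Real.sign_of_pos, ha, hb, mul_neg_iff, ha.not_gt, hb.not_gt] <;>
    norm_num

lemma BSA_eq_expect {n : ℕ} {f p : (Fin n → Bool) → ℝ}
    (hf : ∀ x, p x ≠ 0 ∧ f x = Real.sign (p x)) : BSA f = 𝔼 x, √(#(pivotal p x)) := by
  rw [BSA, Fintype.expect_eq_sum_div_card, Fintype.card_fun, Fintype.card_bool, Fintype.card_fin]
  push_cast
  have hsens : ∀ x, sens f x = #(pivotal p x) := fun x => by
    simp only [sens, pivotal, flipAt_eq_symmDiff_single, (hf _).2,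
      sign_ne_sign_iff (hf _).1 (hf _).1]
  simp only [hsens]

lemma natLog_two_add_one_le (N₀ : ℕ) {n : ℕ} (hn : 0 < n) :
    (Nat.log 2 (N₀ + n) + 1 : ℝ) ≤ (2 * N₀ + 3) * (1 + Real.log n) := by
  have hlog : 0 ≤ Real.log n := Real.log_natCast_nonneg n
  have hsum : Real.log ((N₀ + n : ℕ) : ℝ) ≤ Real.log n + N₀ := by
    calc Real.log ((N₀ + n : ℕ) : ℝ) ≤ Real.log (n * (1 + N₀)) := by
          have : (1 : ℝ) ≤ n := by exact_mod_cast hn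
          apply Real.log_le_log (by positivity)
          push_cast
          nlinarith [(Nat.cast_nonneg N₀ : (0 : ℝ) ≤ N₀)]
      _ = Real.log n + Real.log (1 + N₀) := Real.log_mul (by positivity) (by positivity)
      _ ≤ Real.log n + N₀ := by
          have := Real.log_le_sub_one_of_pos (show (0 : ℝ) < 1 + N₀ by positivity)
          linarith
  have hlogb : (Nat.log 2 (N₀ + n) : ℝ) ≤ 2 * Real.log ((N₀ + n : ℕ) : ℝ) := by
    refine (Real.natLog_le_logb (N₀ + n) 2).trans ?_
    rw [Real.logb, div_le_iff₀ (Real.log_pos (by norm_num)), Nat.cast_ofNat]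
    nlinarith [Real.log_two_gt_d9, Real.log_natCast_nonneg (N₀ + n)]
  nlinarith [mul_nonneg (Nat.cast_nonneg N₀ : (0 : ℝ) ≤ N₀) hlog]

lemma one_le_mul_natLog_sq_pow (N d : ℕ) : 1 ≤ (24 * ((Nat.log 2 N : ℝ) + 1) ^ 2) ^ d :=
  one_le_pow₀ <| one_le_mul_of_one_le_of_one_le (by norm_num) <|
    one_le_pow₀ (le_add_of_nonneg_left (Nat.cast_nonneg _))

end BoolCube

open BoolCube
open scoped BigOperators

/-- Every degree-`d` PTF has polylogarithmic Boolean surface area. -/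
theorem bsa_ptf_polylog (d : ℕ) (hd : 1 ≤ d) :
    ∃ C : ℝ, 0 < C ∧ ∀ n : ℕ, 1 ≤ n → ∀ f : (Fin n → Bool) → ℝ, IsPTF d f →
      BSA f ≤ C * Real.log (Real.exp 1 * n) ^ C := by
  obtain ⟨C, hC, N₀, h⟩ := exists_expect_sqrt_card_pivotal_le d
  let K : ℝ := C * (24 * (2 * N₀ + 3) ^ 2) ^ d
  refine ⟨max K (2 * d + 1 : ℕ), lt_max_of_lt_left (by positivity), ?_⟩
  rintro n hn f ⟨p, -, hpd, hp⟩
  have hlog : Real.log (Real.exp 1 * n) = 1 + Real.log n := by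
    rw [Real.log_mul (by positivity) (by positivity), Real.log_exp]
  have hL : 1 ≤ 1 + Real.log n := le_add_of_nonneg_right (Real.log_natCast_nonneg n)
  rw [BSA_eq_expect hp, hlog]
  calc 𝔼 x, √(#(pivotal (pev p) x))
      ≤ C * (24 * (Nat.log 2 (N₀ + n) + 1) ^ 2) ^ d * (1 + Real.log n) := by
        simpa using h (pev_mem_degreeLE hpd) (fun x => (hp x).1) (energyBound_pow _ _)
          (one_le_mul_natLog_sq_pow _ _)
    _ ≤ C * (24 * ((2 * N₀ + 3) * (1 + Real.log n)) ^ 2) ^ d * (1 + Real.log n) := by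
        gcongr
        exact natLog_two_add_one_le N₀ hn
    _ = K * (1 + Real.log n) ^ (2 * d + 1 : ℕ) := by
        simp only [K, mul_pow _ (1 + Real.log n), ← mul_assoc, ← pow_mul,
          mul_pow _ ((1 + Real.log n) ^ 2), pow_succ _ (2 * d)]
    _ = K * (1 + Real.log n) ^ ((2 * d + 1 : ℕ) : ℝ) := by rw [Real.rpow_natCast]
    _ ≤ _ := by
        gcongr
        · exact le_max_left _ _
        · exact le_max_right _ _
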